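/- Let K be a Hopf subalgebra of H and C a simple subcoalgebra of H. Then {}^C K·C·K = CK, and {}^C K is the maximal Hopf subalgebra of H with this property: any Hopf subalgebra L of H satisfying L·C·K = CK is contained in {}^C K. -/

import Mathlib

open TensorProduct

namespace MackeyPaper

noncomputable section

universe v

variable (k : Type) [Field k] [CharZero k] [IsAlgClosed k]
variable (H : Type) [Ring H] [HopfAlgebra k H]

/-- A subcoalgebra of `H`: a `k`-subspace `C` with `Δ(C) ⊆ C ⊗ C`. -/
def IsSubcoalgebra (C : Submodule k H) : Prop :=
  ∀ c ∈ C, Coalgebra.comul (R := k) c ∈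
    LinearMap.range (TensorProduct.map C.subtype C.subtype)

/-- A simple (nonzero, minimal) subcoalgebra of `H`. -/
def IsSimpleSubcoalgebra (C : Submodule k H) : Prop :=
  IsSubcoalgebra k H C ∧ C ≠ ⊥ ∧
    ∀ D : Submodule k H, D ≤ C → IsSubcoalgebra k H D → D ≠ ⊥ → D = C

/-- A Hopf subalgebra of `H`: a subalgebra which is a subcoalgebra and is
stable under the antipode. -/
def IsHopfSubalgebra (K : Subalgebra k H) : Prop :=
  IsSubcoalgebra k H K.toSubmodule ∧ ∀ x ∈ K, HopfAlgebra.antipode (R := k) x ∈ K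

/-- `Λ` is the (two-sided) idempotent integral of the Hopf subalgebra `K`,
i.e. the integral normalized by `ε(Λ) = 1`. -/
def IsIdempotentIntegral (K : Subalgebra k H) (Λ : H) : Prop :=
  Λ ∈ K ∧ Coalgebra.counit (R := k) Λ = 1 ∧
    ∀ x ∈ K, x * Λ = Coalgebra.counit (R := k) x • Λ ∧
      Λ * x = Coalgebra.counit (R := k) x • Λ

/-- A cocommutative element of `H`; the cocommutative elements of `H` form
the character ring `C(H^*)`. -/
def IsCocomm (x : H) : Prop :=
  (TensorProduct.comm k H H) (Coalgebra.comul (R := k) x) = Coalgebra.comul (R := k) x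

/-- The character ring `C(H^*)`, i.e. the space of cocommutative elements of `H`,
as a `k`-subspace of `H`. -/
def charRing : Submodule k H :=
  LinearMap.ker ((TensorProduct.comm k H H).toLinearMap ∘ₗ Coalgebra.comul (R := k)
      - Coalgebra.comul (R := k))

/-- `d` is the irreducible character (of `H^*`) associated to the simple
subcoalgebra `C`: the unique cocommutative element of `C` whose counit is the
positive square root of `dim_k C`. -/
def IsCharacterOf (d : H) (C : Submodule k H) : Prop :=
  d ∈ C ∧ IsCocomm k H d ∧
    Coalgebra.counit (R := k) d = ((Nat.sqrt (Module.finrank k ↥C) : ℕ) : k)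

/-- The right coset `CK` of a subcoalgebra `C`, i.e. the subspace `C·K`. -/
def CKsub (K : Subalgebra k H) (C : Submodule k H) : Submodule k H :=
  C * K.toSubmodule

/-- The conjugate Hopf subalgebra `ᶜK` of `K` by a simple subcoalgebra `C`
(with associated irreducible character `c`): the span of all simple
subcoalgebras of `H` whose irreducible character `d` satisfies
`d·c·Λ_K = ε(d)·c·Λ_K`.  (The condition is stated for all cocommutative
elements of `C` resp. `D`; this is equivalent, since the cocommutative
elements of a simple subcoalgebra are exactly the scalar multiples of its
irreducible character.) -/
def conjK (K : Subalgebra k H) (Λ : H) (C : Submodule k H) : Submodule k H :=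
  sSup {D : Submodule k H | IsSimpleSubcoalgebra k H D ∧
    ∀ d ∈ D, IsCocomm k H d → ∀ c ∈ C, IsCocomm k H c →
      d * (c * Λ) = Coalgebra.counit (R := k) d • (c * Λ)}

/-- A complete irredundant system of representatives (by simple subcoalgebras)
of the double cosets `L\H/K`.  (Taking `L = ⊥` gives a system of
representatives of the right cosets `H/K`.) -/
def IsDoubleCosetReps (L K : Subalgebra k H) {ι : Type} (rep : ι → Submodule k H) : Prop :=
  (∀ i, IsSimpleSubcoalgebra k H (rep i)) ∧
  (∀ i j, L.toSubmodule * rep i * K.toSubmodule = L.toSubmodule * rep j * K.toSubmodule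
      → i = j) ∧
  (∀ C : Submodule k H, IsSimpleSubcoalgebra k H C →
      ∃ i, C ≤ L.toSubmodule * rep i * K.toSubmodule)

section Ind

variable (K : Subalgebra k H) (M : Type v) [AddCommGroup M] [Module k M]
  [Module ↥K M] [IsScalarTower k ↥K M]

/-- The relations defining the induced module `H ⊗_K M` as a quotient of
`H ⊗_k M`: the `H`-submodule generated by the elements `a ⊗ m - 1 ⊗ a·m`
for `a ∈ K` (equivalently, spanned by all `h·a ⊗ m - h ⊗ a·m`). -/
def indRel : Submodule H (H ⊗[k] M) :=
  Submodule.span H {z | ∃ (a : ↥K) (m : M),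
    z = (a : H) ⊗ₜ[k] m - (1 : H) ⊗ₜ[k] (a • m)}

/-- The induced module `M↑_K^H = H ⊗_K M`, a left `H`-module. -/
abbrev Ind := (H ⊗[k] M) ⧸ indRel k H K M

variable (C : Submodule k H)

/-- The underlying space `CK ⊗_k M` of which the conjugate module `ᶜM` is a
quotient. -/
def CKM : Type _ := ↥(CKsub k H K C) ⊗[k] M

instance : AddCommGroup (CKM k H K M C) :=
  inferInstanceAs (AddCommGroup (↥(CKsub k H K C) ⊗[k] M))

instance : Module k (CKM k H K M C) :=
  inferInstanceAs (Module k (↥(CKsub k H K C) ⊗[k] M))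

/-- The pure tensor `x ⊗ m` as an element of `CK ⊗_k M`. -/
def ckmk (x : ↥(CKsub k H K C)) (m : M) : CKM k H K M C := x ⊗ₜ[k] m

/-- The relations defining the conjugate module `ᶜM = CK ⊗_K M` as a quotient
of `CK ⊗_k M`: `x·a ⊗ m - x ⊗ a·m` for `a ∈ K`. -/
def conjRel : Submodule k (CKM k H K M C) :=
  Submodule.span k {z | ∃ (x : ↥(CKsub k H K C)) (a : ↥K) (m : M)
    (hxa : (x : H) * (a : H) ∈ CKsub k H K C),
    z = ckmk k H K M C ⟨(x : H) * (a : H), hxa⟩ m - ckmk k H K M C x (a • m)}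

/-- The conjugate module `ᶜM := CK ⊗_K M`. -/
abbrev ConjM := CKM k H K M C ⧸ conjRel k H K M C

/-- The canonical copy of the conjugate module `ᶜM = CK ⊗_K M` inside
`H ⊗_K M` (the image of `CK ⊗_K M` under multiplication; this is indeed a
copy of `ᶜM` since `H` is a free right `K`-module and `CK` is one of the
coset summands). -/
def conjMsub : Submodule k (Ind k H K M) :=
  Submodule.span k {z | ∃ (x : H) (_ : x ∈ CKsub k H K C) (m : M),
    z = Submodule.Quotient.mk (x ⊗ₜ[k] m)}

end Ind

section Comp

variable (L K : Subalgebra k H) (Λ : H) (C : Submodule k H)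
variable (M : Type v) [AddCommGroup M] [Module k M] [Module ↥K M] [IsScalarTower k ↥K M]

/-- The underlying space `L ⊗_k (CK ⊗_k M)`. -/
def LCM : Type _ := ↥L ⊗[k] CKM k H K M C

instance : AddCommGroup (LCM k H L K C M) :=
  inferInstanceAs (AddCommGroup (↥L ⊗[k] CKM k H K M C))

instance : Module k (LCM k H L K C M) :=
  inferInstanceAs (Module k (↥L ⊗[k] CKM k H K M C))

/-- The pure tensor `l ⊗ w` as an element of `L ⊗_k (CK ⊗_k M)`. -/
def lcmk (l : ↥L) (w : CKM k H K M C) : LCM k H L K C M := l ⊗ₜ[k] w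

/-- The relations defining `L ⊗_{L ∩ ᶜK} ᶜM` as a quotient of
`L ⊗_k (CK ⊗_k M)`: the balancedness relations over `L ∩ ᶜK` (first set),
together with (the image of) the relations defining `ᶜM = CK ⊗_K M`
(second set). -/
def compRel : Submodule k (LCM k H L K C M) :=
  Submodule.span k
    ({z | ∃ (l : ↥L) (a : H) (haL : a ∈ L) (_ : a ∈ conjK k H K Λ C)
        (x : ↥(CKsub k H K C)) (m : M) (hax : a * (x : H) ∈ CKsub k H K C),
        z = lcmk k H L K C M ⟨(l : H) * a, mul_mem l.2 haL⟩ (ckmk k H K M C x m)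
          - lcmk k H L K C M l (ckmk k H K M C ⟨a * (x : H), hax⟩ m)} ∪
     {z | ∃ (l : ↥L) (x : ↥(CKsub k H K C)) (a : ↥K) (m : M)
        (hxa : (x : H) * (a : H) ∈ CKsub k H K C),
        z = lcmk k H L K C M l (ckmk k H K M C ⟨(x : H) * (a : H), hxa⟩ m)
          - lcmk k H L K C M l (ckmk k H K M C x (a • m))})

/-- The module `L ⊗_{L ∩ ᶜK} ᶜM` (a left `L`-module via multiplication on the
first tensor factor). -/
abbrev Comp := LCM k H L K C M ⧸ compRel k H L K Λ C M

end Comp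

open DirectSum

section Mackey

variable (L K : Subalgebra k H) (Λ : H)

/-- The Mackey isomorphism property for the pair `(L, K)` at the `K`-module
`M`: for any system of double coset representatives, the left-multiplication
map `⊕_C L ⊗_{L ∩ ᶜK} ᶜM → M↑_K^H↓_L^H`, `l ⊗ v ↦ l·v`, is an isomorphism of
`L`-modules.  (A `k`-linear map satisfying the displayed formula on the
spanning elements is automatically `L`-equivariant for the evident
`L`-actions, so this property is stated for `k`-linear maps.) -/
def MackeyAt (M : Type v) [AddCommGroup M] [Module k M] [Module ↥K M]
    [IsScalarTower k ↥K M] [Module.Finite k M] : Prop :=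
  ∀ (ι : Type) [DecidableEq ι] (rep : ι → Submodule k H),
    IsDoubleCosetReps k H L K rep →
    ∃ π : (⨁ i : ι, Comp k H L K Λ (rep i) M) →ₗ[k] Ind k H K M,
      Function.Bijective π ∧
      ∀ (i : ι) (l : ↥L) (x : ↥(CKsub k H K (rep i))) (m : M),
        π (DirectSum.of (fun i => Comp k H L K Λ (rep i) M) i
            (Submodule.Quotient.mk (lcmk k H L K (rep i) M l (ckmk k H K M (rep i) x m)))) =
          Submodule.Quotient.mk (((l : H) * (x : H)) ⊗ₜ[k] m)

/-- `(L, K)` is a Mackey pair of Hopf subalgebras of `H` (here `Λ` is the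
idempotent integral of `K`): for every finite-dimensional `K`-module `M` the
left-multiplication homomorphism `π_M` is an isomorphism. -/
def IsMackeyPair : Prop :=
  ∀ (M : Type v) [AddCommGroup M] [Module k M] [Module ↥K M]
    [IsScalarTower k ↥K M] [Module.Finite k M], MackeyAt k H L K Λ M

end Mackey


section Statements

variable [FiniteDimensional k H] [IsSemisimpleRing H]

/-
Write `f ⇀ a = ∑ f(a₂) a₁` and `a ↼ f = ∑ f(a₁) a₂`, and let `l` be a functional with
`∑ l(t₁) t₂ = 1` for a normalized integral `t` of `H`.

The antipode is involutive (Larson–Radford): `S⁴` is conjugation by a group-like element, and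
`l 1 = tr S²` does not vanish, since otherwise `∑ |tr|² = 0` over the simple blocks of `H`. Hence
`S⁴ = 1`. As `dim H` divides `p - q` for the multiplicities `p`, `q` of the eigenvalues `1`, `-1` of
`S²`, and `p + q = dim H`, even `S² = 1`.

Consequently `(x, h) ↦ l (x * S h)` is symmetric, makes the actions `⇀` and `↼` adjoint, and splits
`H` as the sum of any subcoalgebra and its orthogonal complement, which is again a subcoalgebra.

Let `d` and `c` be the regular characters of `D` and `C`. If `d c Λ = ε(d) c Λ`, then the projection
`π` onto the complement of `CK` commutes with `↼` and with right multiplication by `Λ`, so that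
`ε(π(d c)) = ε(π(d c Λ)) = 0`. This is the trace of an idempotent on `D ⊗ C` that `π` induces; hence
`π` vanishes on `DC`. Conversely, if `DCK ⊆ CK`, then `d c Λ` and `ε(d) c Λ` are right
`K`-invariant cocommutative elements of `CK` with the same counit, and by Schur's lemma such an
element is a multiple of the regular character of `CK`, hence determined by its counit.
-/

section Hit

variable {R A B : Type*} [CommRing R] [AddCommGroup A] [Module R A] [Coalgebra R A]
  [AddCommGroup B] [Module R B] [Coalgebra R B]

open Coalgebra

/-- The left action `f ⇀ a = ∑ f(a₂) a₁` of the dual of a coalgebra. -/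
def leftHit : Module.Dual R A →ₗ[R] A →ₗ[R] A where
  toFun f := (TensorProduct.rid R A).toLinearMap ∘ₗ f.lTensor A ∘ₗ comul
  map_add' f g := by simp only [LinearMap.lTensor_add, LinearMap.add_comp, LinearMap.comp_add]
  map_smul' c f := by
    simp only [LinearMap.lTensor_smul, LinearMap.smul_comp, LinearMap.comp_smul, RingHom.id_apply]

/-- The right action `a ↼ f = ∑ f(a₁) a₂` of the dual of a coalgebra. -/
def rightHit : Module.Dual R A →ₗ[R] A →ₗ[R] A where
  toFun f := (TensorProduct.lid R A).toLinearMap ∘ₗ f.rTensor A ∘ₗ comul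
  map_add' f g := by simp only [LinearMap.rTensor_add, LinearMap.add_comp, LinearMap.comp_add]
  map_smul' c f := by
    simp only [LinearMap.rTensor_smul, LinearMap.smul_comp, LinearMap.comp_smul, RingHom.id_apply]

lemma leftHit_apply (f : Module.Dual R A) (a : A) :
    leftHit f a = TensorProduct.rid R A (f.lTensor A (comul a)) := rfl

lemma rightHit_apply (f : Module.Dual R A) (a : A) :
    rightHit f a = TensorProduct.lid R A (f.rTensor A (comul a)) := rfl

lemma leftHit_eq_sum {ι : Type*} {a : A} (r : Coalgebra.Repr R a ι) (f : Module.Dual R A) :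
    leftHit f a = ∑ i ∈ r.index, f (r.right i) • r.left i := by
  simp only [leftHit_apply, ← r.eq, map_sum, LinearMap.lTensor_tmul, rid_tmul]

lemma rightHit_eq_sum {ι : Type*} {a : A} (r : Coalgebra.Repr R a ι) (f : Module.Dual R A) :
    rightHit f a = ∑ i ∈ r.index, f (r.left i) • r.right i := by
  simp only [rightHit_apply, ← r.eq, map_sum, LinearMap.rTensor_tmul, lid_tmul]

lemma sum_comul_left_tmul {ι M : Type*} [AddCommGroup M] [Module R M]
    (T : A ⊗[R] (A ⊗[R] A) →ₗ[R] M) {a : A} (r : Coalgebra.Repr R a ι) :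
    ∑ i ∈ r.index, T (TensorProduct.assoc R A A A (comul (R := R) (r.left i) ⊗ₜ r.right i)) =
      ∑ i ∈ r.index, T (r.left i ⊗ₜ comul (R := R) (r.right i)) := by
  simpa only [← r.eq, map_sum, LinearMap.rTensor_tmul, LinearMap.lTensor_tmul] using
    congrArg T (coassoc_apply (R := R) a)

lemma comul_leftHit (f : Module.Dual R A) (a : A) :
    comul (R := R) (leftHit f a) = (leftHit f).lTensor A (comul (R := R) a) := by
  have key (z : A ⊗[R] A) (b : A) : (TensorProduct.rid R A).toLinearMap.lTensor A
      ((f.lTensor A).lTensor A (TensorProduct.assoc R A A A (z ⊗ₜ b))) = f b • z := by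
    induction z with
    | zero => simp
    | tmul x y => simp
    | add x y hx hy => simp only [add_tmul, map_add, hx, hy, smul_add]
  have := sum_comul_left_tmul
    ((TensorProduct.rid R A).toLinearMap.lTensor A ∘ₗ (f.lTensor A).lTensor A) (ℛ R a)
  rw [leftHit_eq_sum (ℛ R a), map_sum, ← (ℛ R a).eq, map_sum]
  simpa [key, leftHit_apply] using this

lemma comul_rightHit (f : Module.Dual R A) (a : A) :
    comul (R := R) (rightHit f a) = (rightHit f).rTensor A (comul (R := R) a) := by
  have key (z : A ⊗[R] A) (b : A) : (TensorProduct.lid R A).toLinearMap.rTensor A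
      ((f.rTensor A).rTensor A ((TensorProduct.assoc R A A A).symm (b ⊗ₜ z))) = f b • z := by
    induction z with
    | zero => simp
    | tmul x y => simp [smul_tmul']
    | add x y hx hy => simp only [tmul_add, map_add, hx, hy, smul_add]
  have := sum_comul_left_tmul
    ((TensorProduct.lid R A).toLinearMap.rTensor A ∘ₗ (f.rTensor A).rTensor A ∘ₗ
      (TensorProduct.assoc R A A A).symm.toLinearMap) (ℛ R a)
  rw [rightHit_eq_sum (ℛ R a), map_sum, ← (ℛ R a).eq, map_sum]
  simpa [key, rightHit_apply] using this.symm

lemma rightHit_leftHit (f g : Module.Dual R A) (a : A) :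
    rightHit f (leftHit g a) = leftHit g (rightHit f a) := by
  rw [rightHit_apply, comul_leftHit, ← (ℛ R a).eq, rightHit_eq_sum (ℛ R a)]
  simp

lemma leftHit_leftHit (f g : Module.Dual R A) (a : A) :
    leftHit f (leftHit g a) = leftHit (f ∘ₗ leftHit g) a := by
  rw [leftHit_apply, comul_leftHit, ← (ℛ R a).eq, leftHit_eq_sum (ℛ R a)]
  simp

lemma rightHit_rightHit (f g : Module.Dual R A) (a : A) :
    rightHit f (rightHit g a) = rightHit (f ∘ₗ rightHit g) a := by
  rw [rightHit_apply, comul_rightHit, ← (ℛ R a).eq, rightHit_eq_sum (ℛ R a)]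
  simp

@[simp] lemma leftHit_counit (a : A) : leftHit (counit (R := R)) a = a := by
  rw [leftHit_apply, lTensor_counit_comul, rid_tmul, one_smul]

@[simp] lemma rightHit_counit (a : A) : rightHit (counit (R := R)) a = a := by
  rw [rightHit_apply, rTensor_counit_comul, lid_tmul, one_smul]

lemma apply_leftHit (f g : Module.Dual R A) (a : A) : f (leftHit g a) = g (rightHit f a) := by
  simp [leftHit_eq_sum (ℛ R a), rightHit_eq_sum (ℛ R a), mul_comm]

@[simp] lemma counit_leftHit (f : Module.Dual R A) (a : A) :
    counit (R := R) (leftHit f a) = f a := by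
  rw [apply_leftHit, rightHit_counit]

@[simp] lemma counit_rightHit (f : Module.Dual R A) (a : A) :
    counit (R := R) (rightHit f a) = f a := by
  rw [← apply_leftHit, leftHit_counit]

lemma leftHit_map (φ : A →ₗc[R] B) (f : Module.Dual R B) (a : A) :
    leftHit f (φ a) = φ (leftHit (f ∘ₗ φ.toLinearMap) a) := by
  rw [leftHit_apply, ← CoalgHomClass.map_comp_comul_apply, ← (ℛ R a).eq, leftHit_eq_sum (ℛ R a)]
  simp

lemma leftHit_tensor (f : Module.Dual R A) (g : Module.Dual R B) :
    leftHit ((TensorProduct.lid R R).toLinearMap ∘ₗ TensorProduct.map f g) =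
      TensorProduct.map (leftHit f) (leftHit g) := by
  ext a b
  simp only [AlgebraTensorModule.curry_apply, curry_apply, LinearMap.restrictScalars_self,
    leftHit_apply, TensorProduct.comul_tmul, map_tmul, ← (ℛ R a).eq, ← (ℛ R b).eq, map_sum,
    sum_tmul, tmul_sum, LinearMap.lTensor_tmul, rid_tmul, LinearMap.comp_apply,
    LinearEquiv.coe_coe, lid_tmul, AlgebraTensorModule.tensorTensorTensorComm_tmul,
    smul_tmul_smul, smul_eq_mul]

end Hit

section HopfIdentities

variable {R A : Type*} [CommRing R] [Ring A] [HopfAlgebra R A]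

open Coalgebra HopfAlgebra

lemma sum_comul_left_mul_one_tmul_antipode_right (a : A) :
    ∑ i ∈ (ℛ R a).index, comul (R := R) ((ℛ R a).left i) *
      (1 ⊗ₜ[R] antipode R ((ℛ R a).right i)) = a ⊗ₜ 1 := by
  have key (z : A ⊗[R] A) (b : A) :
      ((LinearMap.mul' R A ∘ₗ (antipode R).lTensor A).lTensor A)
        (TensorProduct.assoc R A A A (z ⊗ₜ b)) = z * (1 ⊗ₜ antipode R b) := by
    induction z with
    | zero => simp
    | tmul x y => simp
    | add x y hx hy => rw [add_tmul, map_add, map_add, hx, hy, add_mul]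
  have := sum_comul_left_tmul
    ((LinearMap.mul' R A ∘ₗ (antipode R).lTensor A).lTensor A) (ℛ R a)
  simp only [key] at this
  rw [this]
  simp only [LinearMap.lTensor_tmul, LinearMap.comp_apply, mul_antipode_lTensor_comul_apply,
    Algebra.algebraMap_eq_smul_one, tmul_smul, smul_tmul']
  rw [← sum_tmul, ← leftHit_eq_sum, leftHit_counit]

lemma sum_antipode_left_tmul_one_mul_comul_right (a : A) :
    ∑ i ∈ (ℛ R a).index, (antipode R ((ℛ R a).left i) ⊗ₜ[R] 1) *
      comul (R := R) ((ℛ R a).right i) = 1 ⊗ₜ a := by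
  have key (z : A ⊗[R] A) (b : A) :
      ((LinearMap.mul' R A ∘ₗ (antipode R).rTensor A).rTensor A)
        ((TensorProduct.assoc R A A A).symm (b ⊗ₜ z)) = (antipode R b ⊗ₜ 1) * z := by
    induction z with
    | zero => simp
    | tmul x y => simp
    | add x y hx hy => rw [tmul_add, map_add, map_add, hx, hy, mul_add]
  have := sum_comul_left_tmul ((LinearMap.mul' R A ∘ₗ (antipode R).rTensor A).rTensor A ∘ₗ
    (TensorProduct.assoc R A A A).symm.toLinearMap) (ℛ R a)
  simp only [LinearMap.comp_apply, LinearEquiv.coe_coe, LinearEquiv.symm_apply_apply, key] at this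
  rw [← this]
  simp only [LinearMap.rTensor_tmul, LinearMap.comp_apply, mul_antipode_rTensor_comul_apply,
    Algebra.algebraMap_eq_smul_one, ← smul_tmul', ← tmul_smul]
  rw [← tmul_sum, ← rightHit_eq_sum, rightHit_counit]

/-- The linear map `a ↦ S a₂ ⊗ S a₁`, a left convolution inverse of the comultiplication; it is
equal to `Δ ∘ S`, which is a right one. -/
def antipodeComulSwap : A →ₗ[R] A ⊗[R] A :=
  TensorProduct.map (antipode R) (antipode R) ∘ₗ (TensorProduct.comm R A A).toLinearMap ∘ₗ comul

lemma convMul_antipodeComulSwap_comul :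
    WithConv.toConv (antipodeComulSwap (R := R) (A := A)) * WithConv.toConv comul = 1 := by
  ext a
  let T : A ⊗[R] (A ⊗[R] A) →ₗ[R] A ⊗[R] A := LinearMap.mul' R (A ⊗[R] A) ∘ₗ
    TensorProduct.map (TensorProduct.map (antipode R) (antipode R) ∘ₗ
      (TensorProduct.comm R A A).toLinearMap) comul ∘ₗ
    (TensorProduct.assoc R A A A).symm.toLinearMap
  have hleft (x y : A) : T (TensorProduct.assoc R A A A (comul (R := R) x ⊗ₜ y)) =
      antipodeComulSwap x * comul (R := R) y := by
    simp [T, antipodeComulSwap]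
  have hright (x y : A) : T (x ⊗ₜ comul (R := R) y) =
      1 ⊗ₜ (antipode R x * y) := by
    calc T (x ⊗ₜ comul (R := R) y)
        = (1 ⊗ₜ antipode R x) * ∑ i ∈ (ℛ R y).index, (antipode R ((ℛ R y).left i) ⊗ₜ[R] 1) *
            comul (R := R) ((ℛ R y).right i) := by
          simp [T, ← (ℛ R y).eq, tmul_sum, Finset.mul_sum, ← mul_assoc]
      _ = 1 ⊗ₜ (antipode R x * y) := by
          rw [sum_antipode_left_tmul_one_mul_comul_right, Algebra.TensorProduct.tmul_mul_tmul,
            one_mul]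
  have := sum_comul_left_tmul T (ℛ R a)
  simp only [hleft, hright, ← tmul_sum, sum_antipode_mul_eq_smul] at this
  rw [(ℛ R a).convMul_apply]
  refine this.trans ?_
  simp [Algebra.TensorProduct.one_def, Algebra.algebraMap_eq_smul_one]

lemma comul_antipode (a : A) : comul (R := R) (antipode R a) =
    TensorProduct.map (antipode R) (antipode R) (TensorProduct.comm R A A (comul (R := R) a)) :=
  (congrArg (fun f : WithConv (A →ₗ[R] A ⊗[R] A) => f.ofConv a)
    (left_inv_eq_right_inv convMul_antipodeComulSwap_comul LinearMap.comul_right_inv)).symm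

lemma comul_antipode_antipode (a : A) : comul (R := R) (antipode R (antipode R a)) =
    TensorProduct.map (antipode R ∘ₗ antipode R) (antipode R ∘ₗ antipode R)
      (comul (R := R) a) := by
  rw [comul_antipode, comul_antipode, ← (ℛ R a).eq]
  simp

lemma sum_comul_antipode_left_mul_right_tmul_one (a : A) :
    ∑ i ∈ (ℛ R a).index, comul (R := R) (antipode R ((ℛ R a).left i)) *
      ((ℛ R a).right i ⊗ₜ[R] 1) = 1 ⊗ₜ antipode R a := by
  have key (z : A ⊗[R] A) (b : A) :
      ((TensorProduct.comm R A A).toLinearMap ∘ₗ TensorProduct.map (antipode R)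
        (LinearMap.mul' R A ∘ₗ (antipode R).rTensor A)) (TensorProduct.assoc R A A A (z ⊗ₜ b)) =
      TensorProduct.map (antipode R) (antipode R) (TensorProduct.comm R A A z) * (b ⊗ₜ 1) := by
    induction z with
    | zero => simp
    | tmul x y => simp
    | add x y hx hy => rw [add_tmul, map_add, map_add, hx, hy, map_add, map_add, add_mul]
  have := sum_comul_left_tmul ((TensorProduct.comm R A A).toLinearMap ∘ₗ
    TensorProduct.map (antipode R) (LinearMap.mul' R A ∘ₗ (antipode R).rTensor A)) (ℛ R a)
  simp only [key, ← comul_antipode] at this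
  rw [this]
  simp only [LinearMap.comp_apply, TensorProduct.map_tmul, mul_antipode_rTensor_comul_apply,
    LinearEquiv.coe_coe, TensorProduct.comm_tmul, Algebra.algebraMap_eq_smul_one, ← smul_tmul',
    ← tmul_smul, ← map_smul]
  rw [← tmul_sum, ← map_sum, ← leftHit_eq_sum, leftHit_counit]

/-- The multiplication of a bialgebra as a coalgebra homomorphism. -/
def mulCoalgHom (R B : Type*) [CommRing R] [Ring B] [Bialgebra R B] : B ⊗[R] B →ₗc[R] B where
  toLinearMap := LinearMap.mul' R B
  counit_comp := by
    ext a b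
    simp [mul_comm]
  map_comp_comul := by
    ext a b
    simp only [AlgebraTensorModule.curry_apply, curry_apply, LinearMap.restrictScalars_self,
      LinearMap.comp_apply, LinearMap.mul'_apply, Bialgebra.comul_mul, TensorProduct.comul_tmul,
      ← (ℛ R a).eq, ← (ℛ R b).eq, sum_tmul, tmul_sum, map_sum, Finset.sum_mul_sum,
      AlgebraTensorModule.tensorTensorTensorComm_tmul, map_tmul,
      Algebra.TensorProduct.tmul_mul_tmul]
    exact Finset.sum_comm

end HopfIdentities

section Integral

variable {R A : Type*} [CommRing R] [Ring A] [HopfAlgebra R A]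

open Coalgebra HopfAlgebra

variable (R) in
/-- Two-sided integrals: the elements on which both regular actions are given by the counit. -/
structure IsTwoSidedIntegral (t : A) : Prop where
  mul_left (a : A) : a * t = counit (R := R) a • t
  mul_right (a : A) : t * a = counit (R := R) a • t

namespace IsTwoSidedIntegral

variable {t : A}

lemma comul_mul_tmul_one (ht : IsTwoSidedIntegral R t) (a : A) :
    comul (R := R) t * (a ⊗ₜ 1) = comul t * (1 ⊗ₜ antipode R a) := by
  rw [← sum_comul_left_mul_one_tmul_antipode_right, Finset.mul_sum]
  simp only [← mul_assoc, ← Bialgebra.comul_mul, ht.mul_right, map_smul, smul_mul_assoc]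
  simp only [← mul_smul_comm, ← Finset.mul_sum, ← tmul_smul, ← map_smul]
  rw [← tmul_sum, ← map_sum, ← rightHit_eq_sum, rightHit_counit]

lemma antipode_tmul_one_mul_comul (ht : IsTwoSidedIntegral R t) (a : A) :
    (antipode R a ⊗ₜ 1) * comul (R := R) t = (1 ⊗ₜ a) * comul t := by
  rw [← sum_antipode_left_tmul_one_mul_comul_right a, Finset.sum_mul]
  simp only [mul_assoc, ← Bialgebra.comul_mul, ht.mul_left, map_smul, mul_smul_comm]
  simp only [← smul_mul_assoc, ← Finset.sum_mul, smul_tmul', ← map_smul]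
  rw [← sum_tmul, ← map_sum, ← leftHit_eq_sum, leftHit_counit]

lemma rightHit_comp_mulRight (ht : IsTwoSidedIntegral R t) (f : Module.Dual R A) (a : A) :
    rightHit (f ∘ₗ LinearMap.mulRight R a) t = rightHit f t * antipode R a := by
  have := congrArg (fun z => TensorProduct.lid R A (f.rTensor A z)) (ht.comul_mul_tmul_one a)
  simp only [← (ℛ R t).eq, Finset.sum_mul, map_sum] at this
  rw [rightHit_eq_sum (ℛ R t), rightHit_eq_sum (ℛ R t), Finset.sum_mul]
  simpa using this

lemma mul_rightHit (ht : IsTwoSidedIntegral R t) (f : Module.Dual R A) (a : A) :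
    a * rightHit f t = rightHit (f ∘ₗ LinearMap.mulLeft R (antipode R a)) t := by
  have := congrArg (fun z => TensorProduct.lid R A (f.rTensor A z))
    (ht.antipode_tmul_one_mul_comul a)
  simp only [← (ℛ R t).eq, Finset.mul_sum, map_sum] at this
  rw [rightHit_eq_sum (ℛ R t), rightHit_eq_sum (ℛ R t), Finset.mul_sum]
  simpa using this.symm

end IsTwoSidedIntegral

end Integral

section ExistsIntegral

variable {k H : Type*} [Field k] [Ring H] [HopfAlgebra k H]

open Coalgebra HopfAlgebra

lemma eq_zero_of_forall_mul_eq_counit_smul [IsSemisimpleRing H] {n : H}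
    (hn : ∀ b, b * n = counit (R := k) b • n) (h0 : counit (R := k) n = 0) : n = 0 := by
  obtain ⟨e, he, hspan⟩ := IsSemisimpleRing.ideal_eq_span_idempotent (Ideal.span {n})
  have hnspan : n ∈ Ideal.span {e} := hspan ▸ Ideal.mem_span_singleton_self n
  have hespan : e ∈ Ideal.span {n} := hspan ▸ Ideal.mem_span_singleton_self e
  obtain ⟨b, rfl⟩ := Ideal.mem_span_singleton'.1 hespan
  obtain ⟨c, hc⟩ := Ideal.mem_span_singleton'.1 hnspan
  have hsq : b * n = 0 := by
    rw [← he.eq, hn b, smul_mul_smul_comm, hn n, h0, zero_smul, smul_zero]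
  rw [← hc, hsq, mul_zero]

variable (k H) in
lemma exists_isTwoSidedIntegral [IsSemisimpleRing H] :
    ∃ t : H, IsTwoSidedIntegral k t ∧ counit (R := k) t = 1 := by
  obtain ⟨e, he, hspan⟩ := IsSemisimpleRing.ideal_eq_span_idempotent
    (RingHom.ker (Bialgebra.counitAlgHom k H))
  have hε : counit (R := k) e = 0 := (hspan ▸ Ideal.mem_span_singleton_self e :
    e ∈ RingHom.ker (Bialgebra.counitAlgHom k H))
  have hker (x : H) (hx : counit (R := k) x = 0) : x * (1 - e) = 0 := by
    have hmem : x ∈ Ideal.span {e} := hspan ▸ (RingHom.mem_ker.2 hx)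
    obtain ⟨y, rfl⟩ := Ideal.mem_span_singleton'.1 hmem
    rw [mul_assoc, mul_sub, he.eq, mul_one, sub_self, mul_zero]
  have hleft (a : H) : a * (1 - e) = counit (R := k) a • (1 - e) := by
    rw [← sub_eq_zero, ← smul_one_mul, ← sub_mul]
    exact hker _ (by simp)
  refine ⟨1 - e, ⟨hleft, fun a => sub_eq_zero.1 ?_⟩, by simp [hε]⟩
  refine eq_zero_of_forall_mul_eq_counit_smul (k := k) (fun b => ?_) (by simp [hε])
  rw [mul_sub, ← mul_assoc, mul_smul_comm, hleft, smul_mul_assoc, smul_comm, ← smul_sub]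

end ExistsIntegral

section Frobenius

variable {k H : Type*} [Field k] [Ring H] [HopfAlgebra k H]

open Coalgebra HopfAlgebra

lemma eq_of_forall_dual {V : Type*} [AddCommGroup V] [Module k V] {a b : V}
    (h : ∀ f : Module.Dual k V, f a = f b) : a = b := by
  rw [← sub_eq_zero, ← Module.forall_dual_apply_eq_zero_iff k]
  intro f
  rw [map_sub, h f, sub_self]

lemma leftHit_one (f : Module.Dual k H) : leftHit f (1 : H) = f 1 • 1 := by
  rw [leftHit_apply, Bialgebra.comul_one, Algebra.TensorProduct.one_def, LinearMap.lTensor_tmul,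
    rid_tmul]

lemma rightHit_one (f : Module.Dual k H) : rightHit f (1 : H) = f 1 • 1 := by
  rw [rightHit_apply, Bialgebra.comul_one, Algebra.TensorProduct.one_def, LinearMap.rTensor_tmul,
    lid_tmul]

variable (k) in
/-- A normalized two-sided integral `t` of `H` together with the functional `l` on `H` satisfying
`∑ l(t₁) t₂ = 1`, which turns out to be an integral of the dual Hopf algebra. -/
structure IsDualPair (t : H) (l : Module.Dual k H) : Prop where
  isTwoSidedIntegral : IsTwoSidedIntegral k t
  counit_eq : counit (R := k) t = 1
  rightHit_eq : rightHit l t = 1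

section FiniteDimensional

variable [FiniteDimensional k H] {t : H}

-- The trace of the zero map `a ↦ S (∑ f(t₁ a) t₂) b` is `f (∑ t₁ S(t₂) b) = ε(t) f(b)`.
lemma IsTwoSidedIntegral.eq_zero_of_rightHit_eq_zero (ht : IsTwoSidedIntegral k t)
    (h1 : counit (R := k) t = 1) {f : Module.Dual k H} (hf : rightHit f t = 0) : f = 0 := by
  ext b
  let T : H →ₗ[k] H := ∑ i ∈ (ℛ k t).index,
    (f ∘ₗ LinearMap.mulLeft k ((ℛ k t).left i)).smulRight (antipode k ((ℛ k t).right i) * b)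
  have hT : T = 0 := by
    ext a
    have : antipode k (rightHit (f ∘ₗ LinearMap.mulRight k a) t) * b = 0 := by
      rw [ht.rightHit_comp_mulRight, hf, zero_mul, map_zero, zero_mul]
    simpa [T, rightHit_eq_sum (ℛ k t), Finset.sum_mul] using this
  have htrace : LinearMap.trace k H T = f b := by
    simp only [T, map_sum, LinearMap.trace_smulRight, LinearMap.comp_apply,
      LinearMap.mulLeft_apply, ← mul_assoc]
    rw [← map_sum, ← Finset.sum_mul, sum_mul_antipode_eq_smul, h1, one_smul, one_mul]
  rw [← htrace, hT, map_zero, LinearMap.zero_apply]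

lemma IsTwoSidedIntegral.bijective_rightHit (ht : IsTwoSidedIntegral k t)
    (h1 : counit (R := k) t = 1) : Function.Bijective (rightHit (R := k).flip t) := by
  have hinj : Function.Injective (rightHit (R := k).flip t) :=
    (injective_iff_map_eq_zero _).2 fun f hf => ht.eq_zero_of_rightHit_eq_zero h1 hf
  exact ⟨hinj, (LinearMap.injective_iff_surjective_of_finrank_eq_finrank
    (Subspace.dual_finrank_eq (K := k) (V := H))).1 hinj⟩

variable (k H) in
lemma exists_isDualPair [IsSemisimpleRing H] :
    ∃ (t : H) (l : Module.Dual k H), IsDualPair k t l := by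
  obtain ⟨t, ht, h1⟩ := exists_isTwoSidedIntegral k H
  obtain ⟨l, hl⟩ := (ht.bijective_rightHit h1).2 1
  exact ⟨t, l, ht, h1, hl⟩

end FiniteDimensional

namespace IsDualPair

variable {t : H} {l : Module.Dual k H} (P : IsDualPair k t l)
include P

lemma apply_eq_one : l t = 1 := by
  rw [← counit_rightHit, P.rightHit_eq, Bialgebra.counit_one]

lemma rightHit_comp_mulRight (b : H) :
    rightHit (l ∘ₗ LinearMap.mulRight k b) t = antipode k b := by
  rw [P.isTwoSidedIntegral.rightHit_comp_mulRight, P.rightHit_eq, one_mul]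

lemma rightHit_comp_mulLeft_antipode (a : H) :
    rightHit (l ∘ₗ LinearMap.mulLeft k (antipode k a)) t = a := by
  rw [← P.isTwoSidedIntegral.mul_rightHit, P.rightHit_eq, mul_one]

lemma trace_eq_sum [FiniteDimensional k H] (T : H →ₗ[k] H) : LinearMap.trace k H T =
    ∑ i ∈ (ℛ k t).index, l (antipode k (T ((ℛ k t).right i)) * (ℛ k t).left i) := by
  have hT : T = ∑ i ∈ (ℛ k t).index,
      (l ∘ₗ LinearMap.mulRight k ((ℛ k t).left i) ∘ₗ antipode k).smulRight
        (T ((ℛ k t).right i)) := by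
    ext a
    conv_lhs => rw [← P.rightHit_comp_mulLeft_antipode a, rightHit_eq_sum (ℛ k t)]
    simp
  conv_lhs => rw [hT]
  simp [LinearMap.trace_smulRight]

variable [FiniteDimensional k H]

lemma rightHit_injective {f g : Module.Dual k H} (hfg : rightHit f t = rightHit g t) : f = g :=
  (P.isTwoSidedIntegral.bijective_rightHit P.counit_eq).1 hfg

lemma rightHit_eq_smul_one (h : H) : rightHit l h = l h • 1 := by
  refine eq_of_forall_dual (k := k) fun g => ?_
  have : g ∘ₗ rightHit l = g 1 • l := by
    apply P.rightHit_injective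
    rw [← rightHit_rightHit, map_smul, LinearMap.smul_apply, P.rightHit_eq, rightHit_one]
  simpa [mul_comm] using congrArg (fun f => f h) this

lemma eq_smul_of_forall_rightHit {m : Module.Dual k H} (hm : ∀ h, rightHit m h = m h • 1) :
    m = m t • l := by
  apply P.rightHit_injective
  rw [map_smul, LinearMap.smul_apply, P.rightHit_eq, hm]

lemma apply_antipode_antipode_mul (b x : H) :
    l (antipode k (antipode k b) * x) = l (x * b) := by
  have : l ∘ₗ LinearMap.mulLeft k (antipode k (antipode k b)) = l ∘ₗ LinearMap.mulRight k b := by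
    apply P.rightHit_injective
    rw [P.rightHit_comp_mulLeft_antipode, P.rightHit_comp_mulRight]
  exact congrArg (fun f => f x) this

lemma bijective_antipode : Function.Bijective (antipode k (A := H)) := by
  have hinj : Function.Injective (antipode k (A := H)) := by
    refine (injective_iff_map_eq_zero _).2 fun a ha => eq_of_forall_dual (k := k) fun f => ?_
    have : f ∘ₗ LinearMap.mulRight k a = 0 := P.rightHit_injective (by
      rw [P.isTwoSidedIntegral.rightHit_comp_mulRight, ha, mul_zero, map_zero,
        LinearMap.zero_apply])
    simpa using congrArg (fun g => g 1) this
  exact ⟨hinj, LinearMap.injective_iff_surjective.1 hinj⟩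

lemma eq_of_forall_apply_mul {a b : H} (h : ∀ x, l (x * a) = l (x * b)) : a = b := by
  apply P.bijective_antipode.1
  rw [← P.rightHit_comp_mulRight, ← P.rightHit_comp_mulRight]
  exact congrArg (rightHit · t) (LinearMap.ext h)

lemma exists_eq_comp_mulRight (f : Module.Dual k H) : ∃ a, f = l ∘ₗ LinearMap.mulRight k a := by
  obtain ⟨a, ha⟩ := P.bijective_antipode.2 (rightHit f t)
  exact ⟨a, P.rightHit_injective (by rw [P.rightHit_comp_mulRight, ha])⟩

lemma leftHit_eq_smul (h : H) : leftHit l h = l h • leftHit l t := by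
  refine eq_of_forall_dual (k := k) fun f => ?_
  have hswap : f ∘ₗ leftHit l = l ∘ₗ rightHit f := by
    ext x
    exact apply_leftHit f l x
  have := P.eq_smul_of_forall_rightHit (m := f ∘ₗ leftHit l) fun h => by
    rw [hswap, ← rightHit_rightHit, P.rightHit_eq_smul_one]
    rfl
  simpa [mul_comm] using congrArg (fun f => f h) this

lemma isGroupLikeElem_leftHit : IsGroupLikeElem k (leftHit l t) where
  counit_eq_one := by rw [counit_leftHit, P.apply_eq_one]
  comul_eq_tmul_self := by
    have hl : leftHit l = l.smulRight (leftHit l t) := LinearMap.ext P.leftHit_eq_smul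
    rw [comul_leftHit]
    conv_lhs => rw [hl, ← (ℛ k t).eq]
    conv_rhs => arg 2; rw [leftHit_eq_sum (ℛ k t)]
    simp [sum_tmul, smul_tmul']

lemma antipode_eq_self : antipode k t = t := by
  obtain ⟨s, hs⟩ := P.bijective_antipode.2 t
  have hε : counit (R := k) s = 1 := by rw [← counit_antipode, hs, P.counit_eq]
  have : antipode k (s * t) = antipode k t := by
    rw [P.isTwoSidedIntegral.mul_left, hε, one_smul]
  rw [antipode_mul_antidistrib, hs, P.isTwoSidedIntegral.mul_left, counit_antipode, P.counit_eq,
    one_smul] at this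
  exact this.symm

lemma apply_antipode (x : H) : l (antipode k x) = l (x * leftHit l t) := by
  obtain ⟨a, ha⟩ := P.exists_eq_comp_mulRight (l ∘ₗ antipode k)
  have hSS : antipode k (antipode k a) = leftHit l t := by
    rw [← P.rightHit_comp_mulRight a, ← ha, leftHit_apply]
    conv_rhs => rw [← P.antipode_eq_self, comul_antipode, ← (ℛ k t).eq]
    simp [rightHit_eq_sum (ℛ k t)]
  have hG : a = leftHit l t := by
    apply P.bijective_antipode.1
    apply P.bijective_antipode.1
    rw [hSS, P.isGroupLikeElem_leftHit.antipode_antipode]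
  rw [← hG]
  exact congrArg (fun f => f x) ha

lemma antipode_pow_four_mul (y : H) :
    antipode k (antipode k (antipode k (antipode k y))) * leftHit l t = leftHit l t * y := by
  refine P.eq_of_forall_apply_mul fun x => ?_
  rw [← mul_assoc, ← mul_assoc, ← P.apply_antipode, antipode_mul_antidistrib,
    P.apply_antipode_antipode_mul, ← antipode_mul_antidistrib, P.apply_antipode, mul_assoc,
    P.apply_antipode_antipode_mul]

lemma exists_leftHit_pow_eq_one : ∃ m : ℕ, 0 < m ∧ leftHit l t ^ m = 1 := by
  have : Finite (GroupLike k H) := (linearIndep_groupLikeVal (R := k) (A := H)).finite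
  let g : GroupLike k H := ⟨leftHit l t, P.isGroupLikeElem_leftHit⟩
  obtain ⟨m, hm, h⟩ := isOfFinOrder_iff_pow_eq_one.1 (isOfFinOrder_of_finite g)
  exact ⟨m, hm, by simpa [g] using congrArg GroupLike.val h⟩

lemma trace_antipode_comp_antipode_comp_leftHit (f : Module.Dual k H) :
    LinearMap.trace k H ((antipode k ∘ₗ antipode k) ∘ₗ leftHit f) = f t * l 1 := by
  have hsum := mul_antipode_lTensor_comul_apply (R := k) (leftHit f t)
  rw [comul_leftHit, ← (ℛ k t).eq] at hsum
  simp only [map_sum, LinearMap.lTensor_tmul, LinearMap.mul'_apply, counit_leftHit] at hsum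
  rw [P.trace_eq_sum]
  simp only [LinearMap.comp_apply, P.apply_antipode_antipode_mul]
  rw [← map_sum, hsum, Algebra.algebraMap_eq_smul_one, map_smul, smul_eq_mul]

lemma trace_antipode_comp_antipode : LinearMap.trace k H (antipode k ∘ₗ antipode k) = l 1 := by
  have := P.trace_antipode_comp_antipode_comp_leftHit counit
  rwa [P.counit_eq, one_mul, show leftHit counit = LinearMap.id from
    LinearMap.ext leftHit_counit, LinearMap.comp_id] at this

end IsDualPair

end Frobenius

section TraceFiniteOrder

variable {k : Type*} [Field k]

open Module Module.End

section Eigenvalues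

variable {V : Type*} [AddCommGroup V] [Module k V]

lemma isSemisimple_of_pow_eq_one [CharZero k] {f : End k V} {N : ℕ} (hN : N ≠ 0) (hf : f ^ N = 1) :
    f.IsSemisimple := by
  refine isSemisimple_of_squarefree_aeval_eq_zero (p := Polynomial.X ^ N - 1) ?_ (by simp [hf])
  exact (Polynomial.X_pow_sub_one_separable_iff.2 (Nat.cast_ne_zero.2 hN)).squarefree

lemma eigenvalue_pow_eq_one {f : End k V} {N : ℕ} (hf : f ^ N = 1) (μ : f.Eigenvalues) :
    (μ : k) ^ N = 1 := by
  obtain ⟨x, hx⟩ := HasEigenvalue.exists_hasEigenvector (f := f) (μ := μ) μ.2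
  have := hx.pow_apply N
  rw [hf, End.one_apply] at this
  exact smul_left_injective k hx.2 (by simpa using this.symm)

variable [FiniteDimensional k V] [IsAlgClosed k]

lemma trace_pow_eq_sum_eigenvalues {f : End k V} (hf : f.IsSemisimple) (j : ℕ) :
    LinearMap.trace k V (f ^ j) =
      ∑ μ : f.Eigenvalues, (finrank k (f.eigenspace μ) : k) * (μ : k) ^ j := by
  classical
  have hint : DirectSum.IsInternal fun μ : f.Eigenvalues => f.eigenspace μ :=
    DirectSum.isInternal_ne_bot_iff.2
      ((DirectSum.isInternal_submodule_iff_iSupIndep_and_iSup_eq_top _).2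
        ⟨f.eigenspaces_iSupIndep, hf.iSup_eigenspace_eq_top⟩)
  have hpow (μ : k) : ∀ x ∈ f.eigenspace μ, (f ^ j) x = μ ^ j • x := by
    intro x hx
    rw [mem_eigenspace_iff] at hx
    induction j with
    | zero => simp
    | succ j ih => rw [pow_succ, End.mul_apply, hx, map_smul, ih, smul_smul, pow_succ']
  have hmaps (μ : k) : Set.MapsTo (f ^ j) (f.eigenspace μ) (f.eigenspace μ) := fun x hx =>
    hpow μ x hx ▸ (f.eigenspace μ).smul_mem _ hx
  rw [LinearMap.trace_eq_sum_trace_restrict hint fun μ => hmaps μ]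
  refine Finset.sum_congr rfl fun μ _ => ?_
  have : (f ^ j).restrict (hmaps μ) = (μ : k) ^ j • LinearMap.id :=
    LinearMap.ext fun x => Subtype.ext (hpow μ x x.2)
  rw [this, map_smul, LinearMap.trace_id, smul_eq_mul, mul_comm]

lemma exists_coe_eq_trace_and_conj_eq [CharZero k] (σ : algebraicClosure ℚ k →+* ℂ)
    {f : End k V} {N : ℕ} (hN : N ≠ 0) (hf : f ^ N = 1) :
    ∃ a b : algebraicClosure ℚ k, a = LinearMap.trace k V f ∧
      b = LinearMap.trace k V (f ^ (N - 1)) ∧ σ b = starRingEnd ℂ (σ a) := by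
  have hμ (μ : f.Eigenvalues) : (μ : k) ^ N = 1 := eigenvalue_pow_eq_one hf μ
  let ζ (μ : f.Eigenvalues) : algebraicClosure ℚ k :=
    ⟨μ, mem_algebraicClosure_iff'.2 (IsIntegral.of_pow hN.bot_lt (hμ μ ▸ isIntegral_one))⟩
  have hζ (μ) : starRingEnd ℂ (σ (ζ μ)) = σ (ζ μ) ^ (N - 1) := by
    have hpow : σ (ζ μ) ^ N = 1 := by
      rw [← map_pow, show ζ μ ^ N = 1 from Subtype.ext (hμ μ), map_one]
    rw [← Complex.inv_eq_conj (Complex.norm_eq_one_of_pow_eq_one hpow hN)]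
    exact inv_eq_of_mul_eq_one_right (by rw [mul_pow_sub_one hN, hpow])
  have hss := isSemisimple_of_pow_eq_one hN hf
  refine ⟨∑ μ : f.Eigenvalues, (finrank k (f.eigenspace μ) : algebraicClosure ℚ k) * ζ μ,
    ∑ μ : f.Eigenvalues, (finrank k (f.eigenspace μ) : algebraicClosure ℚ k) * ζ μ ^ (N - 1),
    ?_, ?_, ?_⟩
  · simpa [ζ] using (trace_pow_eq_sum_eigenvalues hss 1).symm
  · simp [ζ, trace_pow_eq_sum_eigenvalues hss (N - 1)]
  · simp [hζ]

end Eigenvalues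

variable [CharZero k] [IsAlgClosed k] {ι : Type*} [Fintype ι] {V : ι → Type*}
  [∀ i, AddCommGroup (V i)] [∀ i, Module k (V i)] [∀ i, FiniteDimensional k (V i)]

-- Embed the algebraic numbers of `k` into `ℂ`: the summands become `|tr (f i)|²`.
lemma trace_eq_zero_of_sum_trace_mul_trace_pow_eq_zero {N : ℕ} (hN : N ≠ 0)
    {f : ∀ i, End k (V i)} (hf : ∀ i, f i ^ N = 1)
    (h : ∑ i, LinearMap.trace k (V i) (f i) * LinearMap.trace k (V i) (f i ^ (N - 1)) = 0)
    (i : ι) : LinearMap.trace k (V i) (f i) = 0 := by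
  let : Algebra ℚ (algebraicClosure ℚ k) := (algebraicClosure ℚ k).algebra'
  let σ : algebraicClosure ℚ k →+* ℂ := (IsAlgClosed.lift : algebraicClosure ℚ k →ₐ[ℚ] ℂ)
  choose a b ha hb hab using fun i => exists_coe_eq_trace_and_conj_eq σ hN (hf i)
  have hsum : ∑ i, a i * b i = 0 := Subtype.ext (by simpa [ha, hb] using h)
  have hnorm : ∑ i, Complex.normSq (σ (a i)) = 0 := by
    have := congrArg σ hsum
    simp only [map_sum, map_mul, hab, Complex.mul_conj, map_zero] at this
    exact_mod_cast this
  have := (Finset.sum_eq_zero_iff_of_nonneg fun i _ => Complex.normSq_nonneg _).1 hnorm i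
    (Finset.mem_univ i)
  rw [← ha, (map_eq_zero σ).1 (Complex.normSq_eq_zero.1 this), ZeroMemClass.coe_zero]

lemma trace_eq_zero_of_sum_trace_mul_trace_inv_eq_zero {N : ℕ} (hN : N ≠ 0)
    {f g : ∀ i, End k (V i)} (hfg : ∀ i, f i * g i = 1)
    (hf : ∀ i, ∃ c : k, f i ^ N = c • 1)
    (h : ∑ i, LinearMap.trace k (V i) (f i) * LinearMap.trace k (V i) (g i) = 0) (i : ι) :
    LinearMap.trace k (V i) (f i) = 0 := by
  have hroot (i) : ∃ s : k, s ≠ 0 ∧ f i ^ N = s ^ N • 1 := by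
    cases subsingleton_or_nontrivial (V i)
    · exact ⟨1, one_ne_zero, Subsingleton.elim _ _⟩
    · obtain ⟨c, hc⟩ := hf i
      obtain ⟨s, rfl⟩ := IsAlgClosed.exists_pow_nat_eq c hN.bot_lt
      refine ⟨s, ?_, hc⟩
      rintro rfl
      rw [zero_pow hN, zero_smul] at hc
      exact not_isUnit_zero (hc ▸ (IsUnit.of_mul_eq_one _ (hfg i)).pow N)
  choose s hs0 hs using hroot
  have hpow (i) : ((s i)⁻¹ • f i) ^ N = 1 := by
    rw [smul_pow, hs, smul_smul, inv_pow, inv_mul_cancel₀ (pow_ne_zero N (hs0 i)), one_smul]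
  have hg (i) : ((s i)⁻¹ • f i) ^ (N - 1) = s i • g i := by
    refine left_inv_eq_right_inv (a := (s i)⁻¹ • f i) ?_ ?_
    · rw [pow_sub_one_mul hN, hpow]
    · rw [smul_mul_smul_comm, inv_mul_cancel₀ (hs0 i), one_smul, hfg]
  have := trace_eq_zero_of_sum_trace_mul_trace_pow_eq_zero hN hpow (by
    simpa only [hg, map_smul, smul_mul_smul_comm, inv_mul_cancel₀ (hs0 _), one_smul] using h) i
  rw [map_smul, smul_eq_zero] at this
  exact this.resolve_left (inv_ne_zero (hs0 i))

end TraceFiniteOrder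

section PiMatrix

variable {k ι : Type*} [Field k] {d : ι → ℕ}

lemma exists_eq_smul_one_of_mem_center {A : ι → Type*} [∀ i, Ring (A i)] [∀ i, Algebra k (A i)]
    [∀ i, Algebra.IsCentral k (A i)] {x : ∀ i, A i}
    (hx : x ∈ Subalgebra.center k (∀ i, A i)) (i : ι) : ∃ c : k, x i = c • 1 := by
  rw [Subalgebra.center_pi] at hx
  have hxi : x i ∈ Subalgebra.center k (A i) := hx i trivial
  obtain ⟨c, hc⟩ := Algebra.mem_bot.1 (Algebra.IsCentral.out hxi)
  exact ⟨c, by rw [← hc, Algebra.algebraMap_eq_smul_one]⟩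

variable [Fintype ι]

variable (k d) in
/-- The sum of the traces of the blocks: the trace form of a product of matrix algebras. -/
def piTrace : Module.Dual k (∀ i, Matrix (Fin (d i)) (Fin (d i)) k) :=
  ∑ i, Matrix.traceLinearMap (Fin (d i)) k k ∘ₗ LinearMap.proj i

lemma piTrace_apply (x : ∀ i, Matrix (Fin (d i)) (Fin (d i)) k) :
    piTrace k d x = ∑ i, (x i).trace := by
  simp [piTrace]

lemma piTrace_mul_comm (x y : ∀ i, Matrix (Fin (d i)) (Fin (d i)) k) :
    piTrace k d (x * y) = piTrace k d (y * x) := by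
  simp only [piTrace_apply, Pi.mul_apply, Matrix.trace_mul_comm (x _)]

lemma eq_zero_of_piTrace_mul_eq_zero {z : ∀ i, Matrix (Fin (d i)) (Fin (d i)) k}
    (hz : ∀ x, piTrace k d (x * z) = 0) : z = 0 := by
  classical
  funext i
  rw [Pi.zero_apply, Matrix.ext_iff_trace_mul_left]
  intro X
  have := hz (Pi.single i X)
  rw [piTrace_apply, Finset.sum_eq_single i (fun j _ hj => by simp [hj]) (by simp)] at this
  simpa using this

lemma trace_mulLeftRight_pi_matrix (w w' : ∀ i, Matrix (Fin (d i)) (Fin (d i)) k) :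
    LinearMap.trace k _ (LinearMap.mulLeftRight k (w, w')) =
      ∑ i, (w i).trace * (w' i).trace := by
  classical
  rw [LinearMap.trace_eq_matrix_trace k
    (Pi.basis fun i => Matrix.stdBasis k (Fin (d i)) (Fin (d i))), Matrix.trace,
    Fintype.sum_sigma]
  refine Finset.sum_congr rfl fun i _ => ?_
  rw [Fintype.sum_prod_type, Matrix.trace, Matrix.trace, Finset.sum_mul_sum]
  refine Finset.sum_congr rfl fun a _ => Finset.sum_congr rfl fun b _ => ?_
  rw [Matrix.diag_apply, LinearMap.toMatrix_apply, Pi.basis_apply, Matrix.stdBasis_eq_single,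
    LinearMap.mulLeftRight_apply, Pi.basis_repr]
  have hrepr (A : Matrix (Fin (d i)) (Fin (d i)) k) (p) :
      (Matrix.stdBasis k _ _).repr A p = A p.1 p.2 := rfl
  simp [hrepr, Matrix.mul_apply, Matrix.single_apply, ite_and]

lemma trace_eq_zero_of_sum_trace_mul_trace_eq_zero [CharZero k] [IsAlgClosed k]
    {w w' : ∀ i, Matrix (Fin (d i)) (Fin (d i)) k} (hww' : w * w' = 1) {N : ℕ} (hN : N ≠ 0)
    (hw : w ^ N ∈ Subalgebra.center k (∀ i, Matrix (Fin (d i)) (Fin (d i)) k))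
    (h : ∑ i, (w i).trace * (w' i).trace = 0) (i : ι) : (w i).trace = 0 := by
  have trace_toLin {i : ι} (M : Matrix (Fin (d i)) (Fin (d i)) k) :
      LinearMap.trace k _ (Matrix.toLinAlgEquiv' M) = M.trace := Matrix.trace_toLin'_eq M
  rw [← trace_toLin]
  refine trace_eq_zero_of_sum_trace_mul_trace_inv_eq_zero (k := k) hN
    (f := fun i => Matrix.toLinAlgEquiv' (w i)) (g := fun i => Matrix.toLinAlgEquiv' (w' i))
    (fun i => ?_) (fun i => ?_) (by simpa only [trace_toLin] using h) i
  · rw [← map_mul, ← Pi.mul_apply, hww', Pi.one_apply, map_one]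
  · obtain ⟨c, hc⟩ := exists_eq_smul_one_of_mem_center hw i
    exact ⟨c, by rw [← map_pow, ← Pi.pow_apply, hc, map_smul, map_one]⟩

end PiMatrix

section ApplyOneNeZero

variable {k H : Type*} [Field k] [Ring H] [HopfAlgebra k H] [FiniteDimensional k H]

open Coalgebra HopfAlgebra

namespace IsDualPair

variable {t : H} {l : Module.Dual k H} (P : IsDualPair k t l)
include P

lemma exists_inner_antipode_antipode {τ : Module.Dual k H} (hcomm : ∀ x y, τ (x * y) = τ (y * x))
    (hnondeg : ∀ z, (∀ x, τ (x * z) = 0) → z = 0) :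
    ∃ u : Hˣ, (∀ x, τ x = l (x * u)) ∧ ∀ y : H, antipode k (antipode k y) = u * y * ↑u⁻¹ := by
  obtain ⟨u, hu⟩ := P.exists_eq_comp_mulRight τ
  have hτ (x : H) : τ x = l (x * u) := by rw [hu]; rfl
  have hinj : Function.Injective (LinearMap.mulRight k u) :=
    (injective_iff_map_eq_zero _).2 fun z hz => hnondeg z fun x => by
      rw [hτ, mul_assoc, ← LinearMap.mulRight_apply (R := k) u z, hz, mul_zero, map_zero]
  obtain ⟨v, hv : v * u = 1⟩ := LinearMap.injective_iff_surjective.1 hinj 1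
  have hv' : u * v = 1 := hinj (by simp [mul_assoc, hv])
  refine ⟨⟨u, v, hv', hv⟩, hτ, fun y => ?_⟩
  have : antipode k (antipode k y) * u = u * y := P.eq_of_forall_apply_mul fun x => by
    rw [← mul_assoc, ← hτ, hcomm, hτ, mul_assoc, P.apply_antipode_antipode_mul, mul_assoc]
  rw [← this, mul_assoc, Units.inv_mk, hv', mul_one]

-- `S⁴` is conjugation both by `u²` and by the modular group-like `g`, and `g` has finite order.
lemma exists_inv_pow_mem_center {u : Hˣ}
    (hu : ∀ y : H, antipode k (antipode k y) = u * y * ↑u⁻¹) :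
    ∃ N, N ≠ 0 ∧ (↑(u⁻¹ ^ N) : H) ∈ Subalgebra.center k H := by
  obtain ⟨m, hm, hg⟩ := P.exists_leftHit_pow_eq_one
  set g := leftHit l t with hgdef
  have hug : Commute (u : H) g := by
    have := hu g
    rw [hgdef, P.isGroupLikeElem_leftHit.antipode_antipode, ← hgdef,
      Units.eq_mul_inv_iff_mul_eq] at this
    exact this.symm
  have hcentral (y : H) : ↑u⁻¹ ^ 2 * g * y = y * (↑u⁻¹ ^ 2 * g) := by
    have := P.antipode_pow_four_mul y
    rw [hu, hu, ← hgdef] at this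
    rw [mul_assoc, ← this]
    simp only [pow_two, mul_assoc, Units.inv_mul_cancel_left]
  refine ⟨2 * m, by omega, Subalgebra.mem_center_iff.2 fun y => ?_⟩
  have := (show Commute (↑u⁻¹ ^ 2 * g) y from hcentral y).pow_left m
  rw [(hug.units_inv_left.pow_left 2).mul_pow, hg, mul_one, ← pow_mul] at this
  simpa using this.eq.symm

theorem apply_one_ne_zero [CharZero k] [IsAlgClosed k] [IsSemisimpleRing H] : l 1 ≠ 0 := by
  intro hl
  obtain ⟨n, d, -, ⟨φ⟩⟩ := IsSemisimpleRing.exists_algEquiv_pi_matrix_of_isAlgClosed k H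
  obtain ⟨u, hτ, hu⟩ := P.exists_inner_antipode_antipode (τ := piTrace k d ∘ₗ φ.toLinearMap)
    (fun x y => by simp [piTrace_mul_comm (φ x)])
    (fun z hz => (map_eq_zero_iff φ φ.injective).1 <| eq_zero_of_piTrace_mul_eq_zero fun x => by
      simpa using hz (φ.symm x))
  have map_mem_center {x : H} (hx : x ∈ Subalgebra.center k H) :
      φ x ∈ Subalgebra.center k (∀ i, Matrix (Fin (d i)) (Fin (d i)) k) :=
    Subalgebra.mem_center_iff.2 fun y => by
      obtain ⟨y, rfl⟩ := φ.surjective y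
      rw [← map_mul, ← map_mul, Subalgebra.mem_center_iff.1 hx y]
  have sum_trace : ∑ i, (φ ↑u⁻¹ i).trace * (φ u i).trace = 0 := by
    have hS : antipode k ∘ₗ antipode k = LinearMap.mulLeftRight k ((u : H), (↑u⁻¹ : H)) :=
      LinearMap.ext hu
    rw [← hl, ← P.trace_antipode_comp_antipode, hS, ← LinearMap.trace_conj' _ φ.toLinearEquiv,
      AlgEquiv.linearEquivConj_mulLeftRight]
    simp only [Prod.map_apply, trace_mulLeftRight_pi_matrix, mul_comm]
  obtain ⟨N, hN, hpow⟩ := P.exists_inv_pow_mem_center hu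
  have trace_inv (i : Fin n) : (φ ↑u⁻¹ i).trace = 0 := by
    refine trace_eq_zero_of_sum_trace_mul_trace_eq_zero (N := N) ?_ hN ?_ sum_trace i
    · rw [← map_mul, u.inv_mul, map_one]
    · rw [← map_pow, ← Units.val_pow_eq_pow_val]
      exact map_mem_center hpow
  have ht : t ∈ Subalgebra.center k H := Subalgebra.mem_center_iff.2 fun y => by
    rw [P.isTwoSidedIntegral.mul_left, P.isTwoSidedIntegral.mul_right]
  have apply_t : l t = 0 := by
    rw [← mul_one t, ← u.inv_mul, ← mul_assoc, ← hτ]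
    simp only [LinearMap.comp_apply, AlgEquiv.toLinearMap_apply, piTrace_apply]
    refine Finset.sum_eq_zero fun i _ => ?_
    obtain ⟨c, hc⟩ := exists_eq_smul_one_of_mem_center (map_mem_center ht) i
    rw [map_mul, Pi.mul_apply, hc, smul_one_mul, Matrix.trace_smul, trace_inv, smul_zero]
  exact one_ne_zero (P.apply_eq_one.symm.trans apply_t)

end IsDualPair

end ApplyOneNeZero

section Involution

variable {k V : Type*} [Field k] [AddCommGroup V] [Module k V] [FiniteDimensional k V]

lemma exists_nat_eq_trace_of_isIdempotentElem {e : Module.End k V} (he : IsIdempotentElem e) :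
    ∃ n : ℕ, LinearMap.trace k V e = n :=
  ⟨_, (LinearMap.IsIdempotentElem.isProj_range e he).trace⟩

variable [CharZero k]

lemma isIdempotentElem_inv_two_smul_add {R : Type*} [Ring R] [Algebra k R] {e u : R}
    (he : e * e = e) (heu : e * u = u) (hue : u * e = u) (huu : u * u = e) :
    IsIdempotentElem ((2 : k)⁻¹ • (e + u)) := by
  rw [IsIdempotentElem, smul_mul_smul_comm, add_mul, mul_add, mul_add, he, heu, hue, huu,
    add_comm u e, ← two_smul k (e + u), smul_smul, inv_mul_cancel_right₀ two_ne_zero]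

lemma exists_nat_trace_eq_add_and_trace_eq_sub {e u : Module.End k V} (he : e * e = e)
    (heu : e * u = u) (hue : u * e = u) (huu : u * u = e) :
    ∃ a b : ℕ, LinearMap.trace k V e = a + b ∧ LinearMap.trace k V u = a - b ∧
      (a = 0 → e + u = 0) ∧ (b = 0 → e - u = 0) := by
  have hplus := isIdempotentElem_inv_two_smul_add (k := k) he heu hue huu
  have hminus := isIdempotentElem_inv_two_smul_add (k := k) (u := -u) he (by simpa)
    (by simpa) (by simpa)
  have hzero {w : Module.End k V} (hw : IsIdempotentElem ((2 : k)⁻¹ • w))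
      (htr : LinearMap.trace k V ((2 : k)⁻¹ • w) = 0) : w = 0 :=
    (smul_eq_zero_iff_right (inv_ne_zero (two_ne_zero (α := k)))).1
      (LinearMap.IsIdempotentElem.eq_zero_of_trace_eq_zero hw htr)
  obtain ⟨a, ha⟩ := exists_nat_eq_trace_of_isIdempotentElem hplus
  obtain ⟨b, hb⟩ := exists_nat_eq_trace_of_isIdempotentElem hminus
  refine ⟨a, b, ?_, ?_, ?_, ?_⟩
  · rw [← ha, ← hb, ← map_add, ← smul_add, add_add_add_comm, add_neg_cancel, add_zero,
      ← two_smul k e, inv_smul_smul₀ two_ne_zero]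
  · rw [← ha, ← hb, ← map_sub, ← smul_sub, add_sub_add_left_eq_sub, sub_neg_eq_add,
      ← two_smul k u, inv_smul_smul₀ two_ne_zero]
  · rintro rfl
    exact hzero hplus (by simpa using ha)
  · rintro rfl
    rw [sub_eq_add_neg]
    exact hzero hminus (by simpa using hb)

-- With `p` and `q` the multiplicities of the eigenvalues `1` and `-1` of `s`, the dimension `p + q`
-- divides `p - q`.
lemma eq_one_of_finrank_mul_trace_eq_trace {s e : Module.End k V} {x : V} (hx : x ≠ 0)
    (hsx : s x = x) (hs : s * s = 1) (he : e * e = e) (hse : Commute s e)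
    (htr : Module.finrank k V * LinearMap.trace k V (s * e) = LinearMap.trace k V s)
    (h0 : LinearMap.trace k V s ≠ 0) : s = 1 := by
  obtain ⟨p, q, hpq, hs', hp0, hq0⟩ :=
    exists_nat_trace_eq_add_and_trace_eq_sub (mul_one 1) (one_mul s) (mul_one s) hs
  obtain ⟨a, b, -, hse', -, -⟩ := exists_nat_trace_eq_add_and_trace_eq_sub (u := s * e) he
    (by rw [← mul_assoc, ← hse.eq, mul_assoc, he]) (by rw [mul_assoc, he])
    (by rw [hse.symm.mul_mul_mul_comm, hs, he, one_mul])
  have hp : p ≠ 0 := fun h => by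
    have hxx : x + s x = 0 := LinearMap.congr_fun (hp0 h) x
    rw [hsx, ← two_smul k x] at hxx
    exact hx ((smul_eq_zero_iff_right two_ne_zero).1 hxx)
  rw [LinearMap.trace_one] at hpq
  rw [hs', hse'] at htr
  rw [hs'] at h0
  have hdvd : (Module.finrank k V : ℤ) * (a - b) = p - q := by exact_mod_cast htr
  have hsum : (Module.finrank k V : ℤ) = p + q := by exact_mod_cast hpq
  have hne : (p : ℤ) - q ≠ 0 := by exact_mod_cast h0
  refine (sub_eq_zero.1 (hq0 ?_)).symm
  by_contra hq
  exact hne (Int.eq_zero_of_abs_lt_dvd ⟨_, hdvd.symm⟩ (by rw [abs_lt]; omega))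

end Involution

section RegularTrace

variable (k H : Type*) [Field k] [Ring H] [HopfAlgebra k H]

open Coalgebra HopfAlgebra

/-- The character of the left regular representation of a not necessarily commutative algebra. -/
def regularTrace : Module.Dual k H :=
  LinearMap.trace k H ∘ₗ LinearMap.mul k H

/-- The Galois map `a ⊗ b ↦ Δ(a) (1 ⊗ b)` of a Hopf algebra, which identifies the left `H`-module
`H ⊗ H` with a direct sum of copies of `H`. -/
def galoisMap : H ⊗[k] H →ₗ[k] H ⊗[k] H :=
  LinearMap.mul' k (H ⊗[k] H) ∘ₗ TensorProduct.map comul (TensorProduct.mk k H H 1)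

variable {k H}

lemma regularTrace_apply (h : H) :
    regularTrace k H h = LinearMap.trace k H (LinearMap.mulLeft k h) := rfl

lemma galoisMap_tmul (a b : H) : galoisMap k H (a ⊗ₜ b) = comul (R := k) a * (1 ⊗ₜ b) := rfl

lemma galoisMap_map_mulLeft (h : H) (z : H ⊗[k] H) :
    galoisMap k H (TensorProduct.map (LinearMap.mulLeft k h) LinearMap.id z) =
      comul h * galoisMap k H z := by
  induction z with
  | zero => simp only [map_zero, mul_zero]
  | tmul a b => simp [galoisMap_tmul, mul_assoc]
  | add a b ha hb => simp only [map_add, mul_add, ha, hb]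

lemma galoisMap_surjective : Function.Surjective (galoisMap k H) := by
  rw [← LinearMap.range_eq_top, eq_top_iff, ← span_tmul_eq_top, Submodule.span_le]
  rintro _ ⟨a, b, rfl⟩
  refine ⟨∑ i ∈ (ℛ k a).index, (ℛ k a).left i ⊗ₜ (antipode k ((ℛ k a).right i) * b), ?_⟩
  have htmul (y : H) : (1 : H) ⊗ₜ[k] (antipode k y * b) = (1 ⊗ₜ antipode k y) * (1 ⊗ₜ b) := by
    rw [Algebra.TensorProduct.tmul_mul_tmul, one_mul]
  simp only [map_sum, galoisMap_tmul, htmul, ← mul_assoc, ← Finset.sum_mul]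
  rw [sum_comul_left_mul_one_tmul_antipode_right, Algebra.TensorProduct.tmul_mul_tmul, mul_one,
    one_mul]

variable [FiniteDimensional k H]

lemma trace_mulLeft_comul (h : H) :
    LinearMap.trace k (H ⊗[k] H) (LinearMap.mulLeft k (comul h)) =
      Module.finrank k H * regularTrace k H h := by
  let e : (H ⊗[k] H) ≃ₗ[k] (H ⊗[k] H) := LinearEquiv.ofBijective (galoisMap k H)
    ⟨LinearMap.injective_iff_surjective.2 galoisMap_surjective, galoisMap_surjective⟩
  have hconj : e.conj (TensorProduct.map (LinearMap.mulLeft k h) LinearMap.id) =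
      LinearMap.mulLeft k (comul h) := by
    refine LinearMap.ext fun z => ?_
    obtain ⟨z, rfl⟩ := e.surjective z
    rw [LinearEquiv.conj_apply_apply, LinearEquiv.symm_apply_apply]
    exact galoisMap_map_mulLeft h z
  rw [← hconj, LinearMap.trace_conj', LinearMap.trace_tensorProduct', LinearMap.trace_id,
    regularTrace_apply, mul_comm]

lemma regularTrace_leftHit (h : H) :
    regularTrace k H (leftHit (regularTrace k H) h) =
      Module.finrank k H * regularTrace k H h := by
  have htensor (x y : H) : LinearMap.mul k (H ⊗[k] H) (x ⊗ₜ y) =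
      TensorProduct.map (LinearMap.mulLeft k x) (LinearMap.mulLeft k y) := by ext; simp
  rw [← trace_mulLeft_comul, leftHit_eq_sum (ℛ k h), ← (ℛ k h).eq]
  change _ = LinearMap.trace k (H ⊗[k] H) (LinearMap.mul k (H ⊗[k] H) _)
  simp [htensor, LinearMap.trace_tensorProduct', regularTrace_apply, mul_comm]

end RegularTrace

section AntipodeAntipode

variable {k H : Type*} [Field k] [Ring H] [HopfAlgebra k H] [FiniteDimensional k H]

open Coalgebra HopfAlgebra

namespace IsDualPair

variable {t : H} {l : Module.Dual k H} (P : IsDualPair k t l)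
include P

lemma regularTrace_eq_one : regularTrace k H t = 1 := by
  have : LinearMap.mulLeft k t = (counit (R := k)).smulRight t := by
    ext x
    exact P.isTwoSidedIntegral.mul_right x
  rw [regularTrace_apply, this, LinearMap.trace_smulRight, P.counit_eq]

lemma regularTrace_antipode_antipode (h : H) :
    regularTrace k H (antipode k (antipode k h)) = regularTrace k H h := by
  let e : H ≃ₗ[k] H := LinearEquiv.ofBijective (antipode k ∘ₗ antipode k)
    (P.bijective_antipode.comp P.bijective_antipode)
  have hconj : e.conj (LinearMap.mulLeft k h) =
      LinearMap.mulLeft k (antipode k (antipode k h)) := by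
    ext x
    obtain ⟨x, rfl⟩ := e.surjective x
    rw [LinearEquiv.conj_apply_apply, LinearEquiv.symm_apply_apply]
    change antipode k (antipode k (h * x)) = antipode k (antipode k h) * antipode k (antipode k x)
    rw [antipode_mul_antidistrib, antipode_mul_antidistrib]
  rw [regularTrace_apply, regularTrace_apply, ← hconj, LinearMap.trace_conj']

lemma leftHit_regularTrace_antipode_antipode (h : H) :
    leftHit (regularTrace k H) (antipode k (antipode k h)) =
      antipode k (antipode k (leftHit (regularTrace k H) h)) := by
  rw [leftHit_apply, comul_antipode_antipode, leftHit_eq_sum (ℛ k h), ← (ℛ k h).eq]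
  simp [P.regularTrace_antipode_antipode]

variable [CharZero k] [IsAlgClosed k] [IsSemisimpleRing H]

lemma leftHit_eq_one : leftHit l t = 1 := by
  have := P.leftHit_eq_smul 1
  rw [leftHit_one] at this
  exact (smul_right_injective H P.apply_one_ne_zero this).symm

lemma antipode_antipode (y : H) : antipode k (antipode k y) = y := by
  have : Nontrivial H := (Bialgebra.counit_surjective (R := k) (A := H)).nontrivial
  have hn : (Module.finrank k H : k) ≠ 0 := Nat.cast_ne_zero.2 Module.finrank_pos.ne'
  let s : Module.End k H := antipode k ∘ₗ antipode k
  let e : Module.End k H := (Module.finrank k H : k)⁻¹ • leftHit (regularTrace k H)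
  have hs : s * s = 1 := by
    ext x
    have := P.antipode_pow_four_mul x
    rwa [P.leftHit_eq_one, mul_one, one_mul] at this
  have he : e * e = e := by
    have hχ : regularTrace k H ∘ₗ leftHit (regularTrace k H) =
        (Module.finrank k H : k) • regularTrace k H := LinearMap.ext regularTrace_leftHit
    ext x
    simp only [e, Module.End.mul_apply, LinearMap.smul_apply, map_smul, leftHit_leftHit, hχ]
    rw [smul_smul, smul_smul, inv_mul_cancel_right₀ hn]
  have hse : Commute s e := by
    ext x
    simp only [e, s, Module.End.mul_apply, LinearMap.smul_apply, map_smul, LinearMap.comp_apply,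
      P.leftHit_regularTrace_antipode_antipode]
  have htr : Module.finrank k H * LinearMap.trace k H (s * e) = LinearMap.trace k H s := by
    rw [P.trace_antipode_comp_antipode, mul_smul_comm, map_smul, smul_eq_mul,
      mul_inv_cancel_left₀ hn, Module.End.mul_eq_comp, P.trace_antipode_comp_antipode_comp_leftHit,
      P.regularTrace_eq_one, one_mul]
  have h1 : s 1 = 1 := by simp only [s, LinearMap.comp_apply, antipode_one]
  have : s = 1 := eq_one_of_finrank_mul_trace_eq_trace one_ne_zero h1 hs he hse htr
    (by rw [P.trace_antipode_comp_antipode]; exact P.apply_one_ne_zero)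
  exact LinearMap.congr_fun this y

end IsDualPair

variable (k H) in
theorem involutive_antipode [CharZero k] [IsAlgClosed k] [IsSemisimpleRing H] :
    Function.Involutive (antipode k (A := H)) :=
  have ⟨_, _, P⟩ := exists_isDualPair k H
  P.antipode_antipode

/-- A Haar functional: a two-sided integral of the dual Hopf algebra, normalized by `l 1 = 1`.
Invariance under the antipode, a consequence of the uniqueness of such integrals, is included. -/
structure IsHaarFunctional (l : Module.Dual k H) : Prop where
  apply_one : l 1 = 1
  rightHit_eq (h : H) : rightHit l h = l h • 1
  leftHit_eq (h : H) : leftHit l h = l h • 1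
  apply_antipode (h : H) : l (antipode k h) = l h

variable (k H) in
lemma exists_isHaarFunctional [CharZero k] [IsAlgClosed k] [IsSemisimpleRing H] :
    ∃ l : Module.Dual k H, IsHaarFunctional l := by
  obtain ⟨t, l, P⟩ := exists_isDualPair k H
  refine ⟨(l 1)⁻¹ • l, inv_mul_cancel₀ P.apply_one_ne_zero, fun h => ?_, fun h => ?_, fun h => ?_⟩
  · rw [map_smul, LinearMap.smul_apply, P.rightHit_eq_smul_one, LinearMap.smul_apply, smul_assoc]
  · rw [map_smul, LinearMap.smul_apply, P.leftHit_eq_smul, P.leftHit_eq_one, LinearMap.smul_apply,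
      smul_assoc]
  · rw [LinearMap.smul_apply, P.apply_antipode, P.leftHit_eq_one, mul_one, LinearMap.smul_apply]

end AntipodeAntipode

section Subcoalgebra

open Coalgebra HopfAlgebra

-- For a submodule `V` the instances on the range and the kernel of `e` that the library lemma needs
-- are not found, whence this version over fields.
lemma eq_zero_of_isIdempotentElem_of_trace_eq_zero {K V : Type*} [Field K] [CharZero K]
    [AddCommGroup V] [Module K V] [FiniteDimensional K V] {e : Module.End K V}
    (he : IsIdempotentElem e) (h : LinearMap.trace K V e = 0) : e = 0 :=
  LinearMap.IsIdempotentElem.eq_zero_of_trace_eq_zero he h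

section Pairing

variable {K V W : Type*} [Field K] [AddCommGroup V] [Module K V] [AddCommGroup W] [Module K W]

lemma eq_of_forall_map_dual {z w : V ⊗[K] W}
    (h : ∀ (f : Module.Dual K V) (g : Module.Dual K W),
      TensorProduct.map f g z = TensorProduct.map f g w) : z = w := by
  let b := Module.Basis.ofVectorSpace K V
  let c := Module.Basis.ofVectorSpace K W
  have repr_eq (i j) (t : V ⊗[K] W) : (b.tensorProduct c).repr t (i, j) =
      TensorProduct.lid K K (TensorProduct.map (b.coord i) (c.coord j) t) := by
    induction t with
    | zero => simp
    | tmul x y => simp [mul_comm]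
    | add x y hx hy => simp only [map_add, Finsupp.add_apply, hx, hy]
  refine (b.tensorProduct c).ext_elem fun ⟨i, j⟩ => ?_
  rw [repr_eq, repr_eq, h]

lemma lid_map_comul [Coalgebra K V] (f g : Module.Dual K V) (a : V) :
    TensorProduct.lid K K (TensorProduct.map f g (comul a)) = f (leftHit g a) := by
  rw [leftHit_eq_sum (ℛ K a), ← (ℛ K a).eq]
  simp [mul_comm]

lemma leftHit_counit_comp [Coalgebra K V] {π : Module.End K V}
    (hπ : ∀ f, Commute π (rightHit f)) : leftHit (counit ∘ₗ π) = π := by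
  ext x
  refine eq_of_forall_dual (k := K) fun g => ?_
  rw [apply_leftHit, LinearMap.comp_apply, ← counit_rightHit g (π x)]
  exact congrArg counit (LinearMap.congr_fun (hπ g) x)

end Pairing

variable {k H : Type} [Field k] [Ring H] [HopfAlgebra k H] {C D X Y : Submodule k H}

lemma isCocomm_iff_forall_leftHit_eq_rightHit {x : H} :
    IsCocomm k H x ↔ ∀ f : Module.Dual k H, leftHit f x = rightHit f x := by
  have lid_map_comm (f g : Module.Dual k H) :
      TensorProduct.lid k k (TensorProduct.map f g (TensorProduct.comm k H H (comul x))) =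
        f (rightHit g x) := by
    rw [TensorProduct.map_comm, TensorProduct.lid_comm, ← apply_leftHit, ← lid_map_comul,
      TensorProduct.lid_eq_rid]
  refine ⟨fun hx f => eq_of_forall_dual (k := k) fun g => ?_, fun hx =>
    eq_of_forall_map_dual fun f g => (TensorProduct.lid k k).injective ?_⟩
  · rw [← lid_map_comul, ← lid_map_comm, hx]
  · rw [lid_map_comm, lid_map_comul, hx]

lemma IsCocomm.mul {x y : H} (hx : IsCocomm k H x) (hy : IsCocomm k H y) :
    IsCocomm k H (x * y) := by
  have comm_mul (s t : H ⊗[k] H) : TensorProduct.comm k H H (s * t) =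
      TensorProduct.comm k H H s * TensorProduct.comm k H H t :=
    map_mul (Algebra.TensorProduct.comm k H H) s t
  rw [IsCocomm, Bialgebra.comul_mul, comm_mul, hx, hy]

lemma IsSubcoalgebra.leftHit_mem (hY : IsSubcoalgebra k H Y) (f : Module.Dual k H) {y : H}
    (hy : y ∈ Y) : leftHit f y ∈ Y := by
  have mem (z : Y ⊗[k] Y) :
      TensorProduct.rid k H (f.lTensor H (TensorProduct.map Y.subtype Y.subtype z)) ∈ Y := by
    induction z with
    | zero => simp
    | tmul a b => simpa using Y.smul_mem _ a.2
    | add a b ha hb => simpa only [map_add] using Y.add_mem ha hb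
  obtain ⟨z, hz⟩ := hY y hy
  rw [leftHit_apply, ← hz]
  exact mem z

lemma IsSubcoalgebra.rightHit_mem (hY : IsSubcoalgebra k H Y) (f : Module.Dual k H) {y : H}
    (hy : y ∈ Y) : rightHit f y ∈ Y := by
  have mem (z : Y ⊗[k] Y) :
      TensorProduct.lid k H (f.rTensor H (TensorProduct.map Y.subtype Y.subtype z)) ∈ Y := by
    induction z with
    | zero => simp
    | tmul a b => simpa using Y.smul_mem _ b.2
    | add a b ha hb => simpa only [map_add] using Y.add_mem ha hb
  obtain ⟨z, hz⟩ := hY y hy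
  rw [rightHit_apply, ← hz]
  exact mem z

lemma isSubcoalgebra_of_forall_hit_mem (hl : ∀ (f : Module.Dual k H), ∀ y ∈ Y, leftHit f y ∈ Y)
    (hr : ∀ (f : Module.Dual k H), ∀ y ∈ Y, rightHit f y ∈ Y) : IsSubcoalgebra k H Y := by
  intro y hy
  obtain ⟨π, hπ⟩ := Y.subtype.exists_leftInverse_of_injective Y.ker_subtype
  have hπY (v : H) (hv : v ∈ Y) : (π v : H) = v :=
    congrArg Subtype.val (LinearMap.congr_fun hπ ⟨v, hv⟩)
  refine ⟨TensorProduct.map π π (comul y), eq_of_forall_map_dual fun f g =>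
    (TensorProduct.lid k k).injective ?_⟩
  let p : H →ₗ[k] H := Y.subtype ∘ₗ π
  calc TensorProduct.lid k k (TensorProduct.map f g (TensorProduct.map Y.subtype Y.subtype
        (TensorProduct.map π π (comul y))))
      = f (p (leftHit (g ∘ₗ p) y)) := by
        rw [TensorProduct.map_map, TensorProduct.map_map]
        exact lid_map_comul (f ∘ₗ p) (g ∘ₗ p) y
    _ = g (p (rightHit f y)) := by
        rw [show p _ = _ from hπY _ (hl _ y hy), apply_leftHit]; rfl
    _ = TensorProduct.lid k k (TensorProduct.map f g (comul y)) := by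
        rw [show p _ = _ from hπY _ (hr f y hy), ← apply_leftHit, lid_map_comul]

lemma IsSubcoalgebra.inf (hX : IsSubcoalgebra k H X) (hY : IsSubcoalgebra k H Y) :
    IsSubcoalgebra k H (X ⊓ Y) :=
  isSubcoalgebra_of_forall_hit_mem
    (fun f _ hy => ⟨hX.leftHit_mem f hy.1, hY.leftHit_mem f hy.2⟩)
    (fun f _ hy => ⟨hX.rightHit_mem f hy.1, hY.rightHit_mem f hy.2⟩)

lemma isSubcoalgebra_sSup {s : Set (Submodule k H)} (hs : ∀ Y ∈ s, IsSubcoalgebra k H Y) :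
    IsSubcoalgebra k H (sSup s) := by
  have le_comap : sSup s ≤ (LinearMap.range (TensorProduct.mapIncl (sSup s) (sSup s))).comap
      (comul (R := k)) :=
    sSup_le fun Y hY _ hy =>
      TensorProduct.range_mapIncl_mono (le_sSup hY) (le_sSup hY) (hs Y hY _ hy)
  exact le_comap

lemma IsSubcoalgebra.mul (hX : IsSubcoalgebra k H X) (hY : IsSubcoalgebra k H Y) :
    IsSubcoalgebra k H (X * Y) := by
  have range_mul_range_le : LinearMap.range (TensorProduct.mapIncl X X) *
      LinearMap.range (TensorProduct.mapIncl Y Y) ≤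
        LinearMap.range (TensorProduct.mapIncl (X * Y) (X * Y)) := by
    rw [TensorProduct.range_map_eq_span_tmul, TensorProduct.range_map_eq_span_tmul,
      Submodule.span_mul_span, Submodule.span_le]
    rintro _ ⟨_, ⟨x, x', rfl⟩, _, ⟨y, y', rfl⟩, rfl⟩
    exact ⟨⟨x * y, Submodule.mul_mem_mul x.2 y.2⟩ ⊗ₜ ⟨x' * y', Submodule.mul_mem_mul x'.2 y'.2⟩,
      (Algebra.TensorProduct.tmul_mul_tmul _ _ _ _).symm⟩
  have le_comap : X * Y ≤ (LinearMap.range (TensorProduct.mapIncl (X * Y) (X * Y))).comap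
      (comul (R := k)) := by
    refine Submodule.mul_le.2 fun x hx y hy => range_mul_range_le ?_
    rw [Bialgebra.comul_mul]
    exact Submodule.mul_mem_mul (hX x hx) (hY y hy)
  exact le_comap

lemma IsSubcoalgebra.tmul (hD : IsSubcoalgebra k H D) (hC : IsSubcoalgebra k H C) :
    IsSubcoalgebra k (H ⊗[k] H) (LinearMap.range (TensorProduct.mapIncl D C)) := by
  let P := LinearMap.range (TensorProduct.mapIncl D C)
  have le_comap : P ≤ (LinearMap.range (TensorProduct.mapIncl P P)).comap (comul (R := k)) := by
    rw [show P = _ from TensorProduct.range_map_eq_span_tmul _ _, Submodule.span_le]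
    rintro _ ⟨d, c, rfl⟩
    obtain ⟨u, hu⟩ := hD d d.2
    obtain ⟨v, hv⟩ := hC c c.2
    rw [← TensorProduct.range_map_eq_span_tmul]
    let i := (TensorProduct.mapIncl D C).rangeRestrict
    have interchange : TensorProduct.mapIncl P P ∘ₗ TensorProduct.map i i ∘ₗ
        (TensorProduct.tensorTensorTensorComm k D D C C).toLinearMap =
        (TensorProduct.tensorTensorTensorComm k H H H H).toLinearMap ∘ₗ
          TensorProduct.map (TensorProduct.mapIncl D D) (TensorProduct.mapIncl C C) := by
      ext; rfl
    refine ⟨_, (LinearMap.congr_fun interchange (u ⊗ₜ v)).trans ?_⟩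
    rw [Submodule.subtype_apply, Submodule.subtype_apply, TensorProduct.comul_tmul, ← hu, ← hv]
    rfl
  exact le_comap

lemma isSimpleSubcoalgebra_span_one [Nontrivial H] :
    IsSimpleSubcoalgebra k H (k ∙ (1 : H)) := by
  refine ⟨fun x hx => ?_, by simp, fun D hD _ hD0 =>
    ((nonzero_span_atom (K := k) (1 : H) one_ne_zero).le_iff.1 hD).resolve_left hD0⟩
  obtain ⟨a, rfl⟩ := Submodule.mem_span_singleton.1 hx
  let u : k ∙ (1 : H) := ⟨1, Submodule.mem_span_singleton_self 1⟩
  exact ⟨a • (u ⊗ₜ u), by simp [u, Algebra.TensorProduct.one_def]⟩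

lemma one_mem_conjK [Nontrivial H] (K : Subalgebra k H) (Λ : H) :
    (1 : H) ∈ conjK k H K Λ C := by
  have span_le : k ∙ (1 : H) ≤ conjK k H K Λ C := by
    refine le_sSup ⟨isSimpleSubcoalgebra_span_one, fun d hd _ c _ _ => ?_⟩
    obtain ⟨a, rfl⟩ := Submodule.mem_span_singleton.1 hd
    simp
  exact span_le (Submodule.mem_span_singleton_self 1)

section RegularCharacter

/-- The action `f ↦ (y ↦ f ⇀ y)` of the dual of `H` on a subcoalgebra. -/
def IsSubcoalgebra.restrictLeftHit (hY : IsSubcoalgebra k H Y) :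
    Module.Dual k H →ₗ[k] Module.End k Y where
  toFun f := (leftHit f).restrict fun _ => hY.leftHit_mem f
  map_add' f g := by ext y; simp
  map_smul' a f := by ext y; simp

lemma IsSubcoalgebra.restrictLeftHit_apply_coe (hY : IsSubcoalgebra k H Y) (f : Module.Dual k H)
    (y : Y) : (hY.restrictLeftHit f y : H) = leftHit f y := rfl

variable [FiniteDimensional k H]

/-- The character of a subcoalgebra `Y`, viewed as a module over the dual of `H`: the element `χ`
with `f χ = tr (f ⇀ · | Y)` for all functionals `f`. For a simple `Y` it is a multiple of the
irreducible character of `Y`. -/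
def IsSubcoalgebra.regularCharacter (hY : IsSubcoalgebra k H Y) : H :=
  (Module.evalEquiv k H).symm (LinearMap.trace k Y ∘ₗ hY.restrictLeftHit)

lemma IsSubcoalgebra.apply_regularCharacter (hY : IsSubcoalgebra k H Y) (f : Module.Dual k H) :
    f hY.regularCharacter = LinearMap.trace k Y (hY.restrictLeftHit f) :=
  LinearMap.congr_fun ((Module.evalEquiv k H).apply_symm_apply
    (LinearMap.trace k Y ∘ₗ hY.restrictLeftHit)) f

lemma IsSubcoalgebra.regularCharacter_mem (hY : IsSubcoalgebra k H Y) :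
    hY.regularCharacter ∈ Y := by
  by_contra hmem
  obtain ⟨f, hf, hfY⟩ := Submodule.exists_le_ker_of_notMem hmem
  refine hf ?_
  have : hY.restrictLeftHit f = 0 := by
    ext y
    refine eq_of_forall_dual (k := k) fun g => ?_
    rw [hY.restrictLeftHit_apply_coe, apply_leftHit, hfY (hY.rightHit_mem g y.2)]
    simp
  rw [hY.apply_regularCharacter, this, map_zero]

lemma IsSubcoalgebra.isCocomm_regularCharacter (hY : IsSubcoalgebra k H Y) :
    IsCocomm k H hY.regularCharacter := by
  have apply_leftHit_eq_trace_mul (f g : Module.Dual k H) :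
      g (leftHit f hY.regularCharacter) =
        LinearMap.trace k Y (hY.restrictLeftHit g * hY.restrictLeftHit f) := by
    change (g ∘ₗ leftHit f) hY.regularCharacter = _
    rw [hY.apply_regularCharacter]
    congr 1
    ext y
    exact (leftHit_leftHit g f y).symm
  refine isCocomm_iff_forall_leftHit_eq_rightHit.2 fun f => eq_of_forall_dual (k := k) fun g => ?_
  rw [← apply_leftHit, apply_leftHit_eq_trace_mul, apply_leftHit_eq_trace_mul,
    LinearMap.trace_mul_comm]

lemma IsSubcoalgebra.counit_regularCharacter (hY : IsSubcoalgebra k H Y) :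
    counit (R := k) hY.regularCharacter = Module.finrank k Y := by
  have : hY.restrictLeftHit counit = 1 := by
    ext y
    exact leftHit_counit (y : H)
  rw [hY.apply_regularCharacter, this, LinearMap.trace_one]

lemma IsSubcoalgebra.regularCharacter_tmul (hD : IsSubcoalgebra k H D)
    (hC : IsSubcoalgebra k H C) :
    (hD.tmul hC).regularCharacter = hD.regularCharacter ⊗ₜ[k] hC.regularCharacter := by
  let e := LinearEquiv.ofInjective (TensorProduct.mapIncl D C)
    (TensorProduct.map_injective_of_flat_flat _ _ D.injective_subtype C.injective_subtype)
  refine eq_of_forall_map_dual fun f g => (TensorProduct.lid k k).injective ?_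
  have restrict_eq_conj : (hD.tmul hC).restrictLeftHit
      ((TensorProduct.lid k k).toLinearMap ∘ₗ TensorProduct.map f g) =
      e.conj (TensorProduct.map (hD.restrictLeftHit f) (hC.restrictLeftHit g)) := by
    have intertwine : (hD.tmul hC).restrictLeftHit
        ((TensorProduct.lid k k).toLinearMap ∘ₗ TensorProduct.map f g) ∘ₗ e.toLinearMap =
        e.toLinearMap ∘ₗ TensorProduct.map (hD.restrictLeftHit f) (hC.restrictLeftHit g) :=
      TensorProduct.ext' fun d c => Subtype.ext <|
        LinearMap.congr_fun (leftHit_tensor f g) ((d : H) ⊗ₜ (c : H))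
    ext z
    obtain ⟨z, rfl⟩ := e.surjective z
    rw [LinearEquiv.conj_apply_apply, e.symm_apply_apply]
    exact congrArg Subtype.val (LinearMap.congr_fun intertwine z)
  have trace_conj := LinearMap.trace_conj' (R := k) (M := D ⊗[k] C)
    (N := LinearMap.range (TensorProduct.mapIncl D C))
    (TensorProduct.map (hD.restrictLeftHit f) (hC.restrictLeftHit g)) e
  refine ((hD.tmul hC).apply_regularCharacter
    ((TensorProduct.lid k k).toLinearMap ∘ₗ TensorProduct.map f g)).trans ?_
  rw [restrict_eq_conj]
  refine trace_conj.trans ?_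
  rw [LinearMap.trace_tensorProduct', TensorProduct.map_tmul, TensorProduct.lid_tmul, smul_eq_mul,
    hD.apply_regularCharacter, hC.apply_regularCharacter]

lemma IsSubcoalgebra.leftHit_eq_zero_of_apply_regularCharacter_eq_zero [CharZero k]
    (hY : IsSubcoalgebra k H Y) {p : Module.Dual k H} (hp : IsIdempotentElem (leftHit p))
    (h : p hY.regularCharacter = 0) {y : H} (hy : y ∈ Y) : leftHit p y = 0 := by
  have idem : IsIdempotentElem (hY.restrictLeftHit p) :=
    LinearMap.ext fun y => Subtype.ext (LinearMap.congr_fun hp y)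
  rw [hY.apply_regularCharacter] at h
  exact congrArg Subtype.val
    (LinearMap.congr_fun (eq_zero_of_isIdempotentElem_of_trace_eq_zero idem h) ⟨y, hy⟩)

-- The endomorphism of `D ⊗ C` induced by `ε ∘ π ∘ mul` is an idempotent of trace `ε (π (d * c))`.
lemma IsSubcoalgebra.mul_le_ker_of_counit_apply_eq_zero [CharZero k]
    (hD : IsSubcoalgebra k H D) (hC : IsSubcoalgebra k H C) {π : Module.End k H}
    (hπ : IsIdempotentElem π) (hcomm : ∀ f, Commute π (rightHit f))
    (h : counit (R := k) (π (hD.regularCharacter * hC.regularCharacter)) = 0) :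
    D * C ≤ LinearMap.ker π := by
  let q : Module.Dual k (H ⊗[k] H) := (counit ∘ₗ π) ∘ₗ LinearMap.mul' k H
  have mul'_leftHit (z : H ⊗[k] H) :
      LinearMap.mul' k H (leftHit q z) = π (LinearMap.mul' k H z) := by
    have := leftHit_map (mulCoalgHom k H) (counit ∘ₗ π) z
    rw [leftHit_counit_comp hcomm] at this
    exact this.symm
  have idem : IsIdempotentElem (leftHit q) := by
    have comp_leftHit : q ∘ₗ leftHit q = q := LinearMap.ext fun w => by
      change counit (π (LinearMap.mul' k H (leftHit q w))) = _
      rw [mul'_leftHit]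
      exact congrArg counit (LinearMap.congr_fun hπ _)
    refine LinearMap.ext fun z => (leftHit_leftHit q q z).trans ?_
    rw [comp_leftHit]
  refine Submodule.mul_le.2 fun u hu v hv => ?_
  have leftHit_tmul : leftHit q (u ⊗ₜ v) = 0 := by
    refine (hD.tmul hC).leftHit_eq_zero_of_apply_regularCharacter_eq_zero idem ?_
      ⟨⟨u, hu⟩ ⊗ₜ ⟨v, hv⟩, rfl⟩
    rw [hD.regularCharacter_tmul hC]
    exact h
  rw [LinearMap.mem_ker, ← LinearMap.mul'_apply (R := k), ← mul'_leftHit, leftHit_tmul, map_zero]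

end RegularCharacter

end Subcoalgebra

section HaarForm

open Coalgebra HopfAlgebra

variable {k H : Type} [Field k] [Ring H] [HopfAlgebra k H]

/-- The bilinear form `(x, h) ↦ l (x * S h)`. When `l` is a Haar functional, its values on matrix
coefficients are given by the Schur orthogonality relations. -/
def haarForm (l : Module.Dual k H) : LinearMap.BilinForm k H :=
  ((LinearMap.mul k H).compr₂ l).compl₂ (antipode k)

lemma haarForm_apply (l : Module.Dual k H) (x h : H) : haarForm l x h = l (x * antipode k h) := rfl

lemma haarForm_mul_left (l : Module.Dual k H) (hS : Function.Involutive (antipode k (A := H)))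
    (x a h : H) : haarForm l (x * a) h = haarForm l x (h * antipode k a) := by
  rw [haarForm_apply, haarForm_apply, antipode_mul_antidistrib, hS, mul_assoc]

lemma sum_right_mul_antipode_left (hS : Function.Involutive (antipode k (A := H))) (h : H) :
    ∑ i ∈ (ℛ k h).index, (ℛ k h).right i * antipode k ((ℛ k h).left i) =
      counit (R := k) h • (1 : H) := by
  have := congrArg (antipode k) (sum_mul_antipode_eq_smul (R := k) (ℛ k h))
  simpa only [map_sum, antipode_mul_antidistrib, hS _, map_smul, antipode_one] using this

namespace IsHaarFunctional

variable {l : Module.Dual k H} {Y : Submodule k H}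

lemma isSymm_haarForm (hl : IsHaarFunctional l) (hS : Function.Involutive (antipode k (A := H))) :
    (haarForm l).IsSymm where
  eq x h := by
    rw [haarForm_apply, haarForm_apply, ← hl.apply_antipode,
      antipode_mul_antidistrib, hS]

lemma leftHit_haarForm_flip (hl : IsHaarFunctional l) (x h : H) :
    leftHit ((haarForm l).flip h) x = rightHit (haarForm l x) h := by
  let G : H ⊗[k] H →ₗ[k] H := (TensorProduct.rid k H).toLinearMap ∘ₗ l.lTensor H
  have G_mul_tmul_one (t : H ⊗[k] H) (y : H) : G (t * (y ⊗ₜ 1)) = G t * y := by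
    induction t with
    | zero => simp
    | tmul p q => simp [G]
    | add p q hp hq => rw [add_mul, map_add, map_add, hp, hq, add_mul]
  have G_mul_one_tmul (t : H ⊗[k] H) : G (t * (1 ⊗ₜ antipode k h)) =
      TensorProduct.rid k H (((haarForm l).flip h).lTensor H t) := by
    induction t with
    | zero => simp
    | tmul p q => simp [G, haarForm_apply]
    | add p q hp hq => rw [add_mul, map_add, map_add, map_add, hp, hq]
  have G_comul (y : H) : G (comul y) = l y • 1 := hl.leftHit_eq y
  calc leftHit ((haarForm l).flip h) x
      = G (comul (R := k) x * (1 ⊗ₜ antipode k h)) := (G_mul_one_tmul _).symm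
    _ = ∑ i ∈ (ℛ k h).index, G (comul (R := k) (x * antipode k ((ℛ k h).left i)) *
          ((ℛ k h).right i ⊗ₜ 1)) := by
        rw [← sum_comul_antipode_left_mul_right_tmul_one]
        simp only [Finset.mul_sum, map_sum, ← mul_assoc, ← Bialgebra.comul_mul]
    _ = rightHit (haarForm l x) h := by
        rw [rightHit_eq_sum (ℛ k h)]
        refine Finset.sum_congr rfl fun i _ => ?_
        rw [G_mul_tmul_one, G_comul, smul_one_mul, haarForm_apply]

lemma haarForm_rightHit (hl : IsHaarFunctional l) (f : Module.Dual k H) (x h : H) :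
    haarForm l (rightHit f x) h = haarForm l x (leftHit f h) := by
  rw [apply_leftHit, ← hl.leftHit_haarForm_flip, apply_leftHit]
  rfl

lemma haarForm_leftHit (hl : IsHaarFunctional l) (hS : Function.Involutive (antipode k (A := H)))
    (f : Module.Dual k H) (x h : H) :
    haarForm l (leftHit f x) h = haarForm l x (rightHit f h) := by
  rw [(hl.isSymm_haarForm hS).eq, ← hl.haarForm_rightHit, (hl.isSymm_haarForm hS).eq]

lemma leftHit_haarForm_of_isCocomm (hl : IsHaarFunctional l)
    (hS : Function.Involutive (antipode k (A := H))) {x : H} (hx : IsCocomm k H x) (h : H) :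
    leftHit (haarForm l x) h = rightHit (haarForm l x) h := by
  refine eq_of_forall_dual (k := k) fun g => ?_
  rw [apply_leftHit, ← apply_leftHit _ g, ← hl.haarForm_leftHit hS, ← hl.haarForm_rightHit,
    isCocomm_iff_forall_leftHit_eq_rightHit.1 hx]

lemma isSubcoalgebra_orthogonal (hl : IsHaarFunctional l)
    (hS : Function.Involutive (antipode k (A := H))) (hY : IsSubcoalgebra k H Y) :
    IsSubcoalgebra k H ((haarForm l).orthogonal Y) := by
  refine isSubcoalgebra_of_forall_hit_mem (fun f x hx => ?_) (fun f x hx => ?_) <;>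
    rw [LinearMap.BilinForm.mem_orthogonal_iff] at hx ⊢ <;> intro y hy
  · exact (hl.haarForm_rightHit f y x).symm.trans (hx _ (hY.rightHit_mem f hy))
  · exact (hl.haarForm_leftHit hS f y x).symm.trans (hx _ (hY.leftHit_mem f hy))

variable [FiniteDimensional k H]

lemma trace_leftHit_haarForm_flip (hl : IsHaarFunctional l)
    (hS : Function.Involutive (antipode k (A := H))) (h : H) :
    LinearMap.trace k H (leftHit ((haarForm l).flip h)) = counit (R := k) h := by
  have leftHit_eq_sum_smulRight : leftHit ((haarForm l).flip h) =
      ∑ i ∈ (ℛ k h).index, ((haarForm l).flip ((ℛ k h).left i)).smulRight ((ℛ k h).right i) := by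
    ext x
    rw [hl.leftHit_haarForm_flip, rightHit_eq_sum (ℛ k h)]
    simp
  calc LinearMap.trace k H (leftHit ((haarForm l).flip h))
      = l (∑ i ∈ (ℛ k h).index, (ℛ k h).right i * antipode k ((ℛ k h).left i)) := by
        rw [leftHit_eq_sum_smulRight, map_sum, map_sum]
        simp only [LinearMap.trace_smulRight, LinearMap.BilinForm.flip_apply, haarForm_apply]
    _ = counit (R := k) h := by
        rw [sum_right_mul_antipode_left hS, map_smul, hl.apply_one, smul_eq_mul, mul_one]

lemma haarForm_regularCharacter (hl : IsHaarFunctional l)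
    (hS : Function.Involutive (antipode k (A := H))) (hY : IsSubcoalgebra k H Y) {h : H}
    (hh : h ∈ Y) : haarForm l hY.regularCharacter h = counit (R := k) h := by
  rw [← LinearMap.BilinForm.flip_apply, hY.apply_regularCharacter,
    ← hl.trace_leftHit_haarForm_flip hS h]
  refine LinearMap.trace_restrict_eq_of_forall_mem Y _ (fun x => ?_) fun x => hY.leftHit_mem _
  rw [hl.leftHit_haarForm_flip]
  exact hY.rightHit_mem _ hh

lemma disjoint_orthogonal (hl : IsHaarFunctional l)
    (hS : Function.Involutive (antipode k (A := H))) (hY : IsSubcoalgebra k H Y) :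
    Disjoint Y ((haarForm l).orthogonal Y) := by
  have hZ := hY.inf (hl.isSubcoalgebra_orthogonal hS hY)
  refine disjoint_iff_inf_le.2 fun x hx => (Submodule.mem_bot k).2 ?_
  refine eq_of_forall_dual (k := k) fun f => ?_
  rw [map_zero, ← counit_rightHit, ← hl.haarForm_regularCharacter hS hZ (hZ.rightHit_mem f hx)]
  exact (hZ.rightHit_mem f hx).2 _ hZ.regularCharacter_mem.1

lemma isCompl_orthogonal (hl : IsHaarFunctional l)
    (hS : Function.Involutive (antipode k (A := H))) (hY : IsSubcoalgebra k H Y) :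
    IsCompl Y ((haarForm l).orthogonal Y) :=
  (LinearMap.BilinForm.isCompl_orthogonal_iff_disjoint (hl.isSymm_haarForm hS).isRefl).2
    (hl.disjoint_orthogonal hS hY)

lemma eq_smul_regularCharacter (hl : IsHaarFunctional l)
    (hS : Function.Involutive (antipode k (A := H))) (hY : IsSubcoalgebra k H Y) {x : H}
    (hx : x ∈ Y) {μ : k} (hμ : ∀ h ∈ Y, haarForm l x h = μ * counit h) :
    x = μ • hY.regularCharacter := by
  refine sub_eq_zero.1 ((Submodule.disjoint_def.1 (hl.disjoint_orthogonal hS hY)) _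
    (Y.sub_mem hx (Y.smul_mem μ hY.regularCharacter_mem)) ?_)
  refine LinearMap.BilinForm.mem_orthogonal_iff.2 fun h hh => ?_
  change haarForm l h _ = 0
  rw [(hl.isSymm_haarForm hS).eq, map_sub, map_smul,
    LinearMap.sub_apply, LinearMap.smul_apply, hl.haarForm_regularCharacter hS hY hh, hμ h hh,
    smul_eq_mul, sub_self]

lemma le_sSup_isSimpleSubcoalgebra (hl : IsHaarFunctional l)
    (hS : Function.Involutive (antipode k (A := H))) (hY : IsSubcoalgebra k H Y) :
    Y ≤ sSup {D | D ≤ Y ∧ IsSimpleSubcoalgebra k H D} := by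
  set N := sSup {D | D ≤ Y ∧ IsSimpleSubcoalgebra k H D}
  have hN : IsSubcoalgebra k H N := isSubcoalgebra_sSup fun D hD => hD.2.1
  have inf_eq_bot : (haarForm l).orthogonal N ⊓ Y = ⊥ := by
    by_contra hne
    obtain ⟨D, hDle, ⟨hD, hD0⟩, hDmin⟩ := exists_minimal_le_of_wellFoundedLT
      (fun D : Submodule k H => IsSubcoalgebra k H D ∧ D ≠ ⊥) _
      ⟨(hl.isSubcoalgebra_orthogonal hS hN).inf hY, hne⟩
    have hDN : D ≤ N := le_sSup ⟨hDle.trans inf_le_right, hD, hD0, fun E hED hE hE0 =>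
      hED.antisymm (hDmin ⟨hE, hE0⟩ hED)⟩
    exact hD0 (le_bot_iff.1 (hl.disjoint_orthogonal hS hN hDN (hDle.trans inf_le_left)))
  calc Y = (N ⊔ (haarForm l).orthogonal N) ⊓ Y := by
        rw [(hl.isCompl_orthogonal hS hN).sup_eq_top, top_inf_eq]
    _ = N ⊔ (haarForm l).orthogonal N ⊓ Y := sup_inf_assoc_of_le _ (sSup_le fun D hD => hD.1)
    _ ≤ N := by rw [inf_eq_bot, sup_bot_eq]

end IsHaarFunctional

end HaarForm

section Cosets

open Coalgebra HopfAlgebra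

variable {k H : Type} [Field k] [Ring H] [HopfAlgebra k H] {l : Module.Dual k H}
  {K : Subalgebra k H} {C D Y : Submodule k H} {Λ : H}

lemma mul_mem_mul_toSubmodule {y a : H} (hy : y ∈ C * K.toSubmodule) (ha : a ∈ K) :
    y * a ∈ C * K.toSubmodule := by
  have := Submodule.mul_mem_mul hy (show a ∈ K.toSubmodule from ha)
  rwa [mul_assoc, K.isIdempotentElem_toSubmodule] at this

lemma IsCocomm.sub {x y : H} (hx : IsCocomm k H x) (hy : IsCocomm k H y) :
    IsCocomm k H (x - y) := by
  rw [IsCocomm, map_sub, map_sub, hx, hy]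

lemma IsCocomm.smul {x : H} (hx : IsCocomm k H x) (a : k) : IsCocomm k H (a • x) := by
  rw [IsCocomm, map_smul, map_smul, hx]

variable [FiniteDimensional k H]

lemma IsHaarFunctional.isCocomm_of_isIdempotentIntegral [CharZero k] (hl : IsHaarFunctional l)
    (hS : Function.Involutive (antipode k (A := H))) (hK : IsHopfSubalgebra k H K)
    (hΛ : IsIdempotentIntegral k H K Λ) : IsCocomm k H Λ := by
  have haarForm_eq (h : H) (hh : h ∈ K.toSubmodule) : haarForm l Λ h = l Λ * counit h := by
    rw [haarForm_apply, (hΛ.2.2 _ (hK.2 h hh)).2, counit_antipode, map_smul, smul_eq_mul, mul_comm]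
  rw [hl.eq_smul_regularCharacter hS hK.1 hΛ.1 haarForm_eq]
  exact hK.1.isCocomm_regularCharacter.smul _

lemma IsHaarFunctional.commute_projection {T : Module.End k H} (hl : IsHaarFunctional l)
    (hS : Function.Involutive (antipode k (A := H))) (hY : IsSubcoalgebra k H Y)
    (hTY : ∀ y ∈ Y, T y ∈ Y)
    (hT : ∀ y ∈ (haarForm l).orthogonal Y, T y ∈ (haarForm l).orthogonal Y) :
    Commute (Submodule.projection _ Y (hl.isCompl_orthogonal hS hY).symm) T := by
  refine (LinearMap.IsIdempotentElem.commute_iff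
    (Submodule.isIdempotentElem_projection _)).2 ⟨?_, ?_⟩
  · rwa [Submodule.range_projection]
  · rwa [Submodule.ker_projection]

lemma IsHaarFunctional.mul_le_mul_toSubmodule [CharZero k] (hl : IsHaarFunctional l)
    (hS : Function.Involutive (antipode k (A := H))) (hK : IsHopfSubalgebra k H K) (hΛK : Λ ∈ K)
    (hΛ : counit (R := k) Λ = 1) (hD : IsSubcoalgebra k H D) (hC : IsSubcoalgebra k H C)
    (h : hD.regularCharacter * (hC.regularCharacter * Λ) =
      counit (R := k) hD.regularCharacter • (hC.regularCharacter * Λ)) :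
    D * C ≤ C * K.toSubmodule := by
  have hY := hC.mul hK.1
  let π := Submodule.projection _ (C * K.toSubmodule) (hl.isCompl_orthogonal hS hY).symm
  have commute_rightHit (f : Module.Dual k H) : Commute π (rightHit f) :=
    hl.commute_projection hS hY (fun _ => hY.rightHit_mem f)
      fun _ => (hl.isSubcoalgebra_orthogonal hS hY).rightHit_mem f
  have commute_mulRight : Commute π (LinearMap.mulRight k Λ) := by
    refine hl.commute_projection hS hY (fun _ hy => mul_mem_mul_toSubmodule hy hΛK) fun x hx => ?_
    refine LinearMap.BilinForm.mem_orthogonal_iff.2 fun y hy => ?_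
    have orthogonal_mul : haarForm l (y * antipode k Λ) x = 0 :=
      hx _ (mul_mem_mul_toSubmodule hy (hK.2 Λ hΛK))
    rwa [haarForm_mul_left l hS, hS] at orthogonal_mul
  have π_mul (x : H) : π (x * Λ) = π x * Λ := LinearMap.congr_fun commute_mulRight x
  have counit_π : counit (R := k) (π (hD.regularCharacter * hC.regularCharacter)) = 0 := by
    rw [← mul_one (counit _), ← hΛ, ← Bialgebra.counit_mul, ← π_mul, mul_assoc, h, map_smul,
      (Submodule.projection_apply_eq_zero_iff _).2
        (Submodule.mul_mem_mul hC.regularCharacter_mem hΛK), smul_zero, map_zero]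
  exact (hD.mul_le_ker_of_counit_apply_eq_zero hC (Submodule.isIdempotentElem_projection _)
    commute_rightHit counit_π).trans_eq (Submodule.ker_projection _)

lemma IsSimpleSubcoalgebra.exists_apply_eq_mul_counit [IsAlgClosed k]
    (hC : IsSimpleSubcoalgebra k H C) {φ : Module.Dual k H}
    (hφ : ∀ h, leftHit φ h = rightHit φ h) : ∃ μ : k, ∀ u ∈ C, φ u = μ * counit u := by
  obtain ⟨hCs, hC0, hCmin⟩ := hC
  have : Nontrivial C := Submodule.nontrivial_iff_ne_bot.2 hC0
  obtain ⟨μ, hμ⟩ := Module.End.exists_eigenvalue (hCs.restrictLeftHit φ)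
  obtain ⟨v, hv, hv0⟩ := hμ.exists_hasEigenvector
  let E : Submodule k H := C ⊓ Module.End.eigenspace (leftHit φ) μ
  have mem_E {u : H} : u ∈ E ↔ u ∈ C ∧ leftHit φ u = μ • u := by
    rw [Submodule.mem_inf, Module.End.mem_eigenspace_iff]
  have hE : IsSubcoalgebra k H E := by
    refine isSubcoalgebra_of_forall_hit_mem (fun f u hu => ?_) fun f u hu => ?_ <;>
      rw [mem_E] at hu ⊢
    · exact ⟨hCs.leftHit_mem f hu.1, by rw [hφ, rightHit_leftHit, ← hφ, hu.2, map_smul]⟩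
    · exact ⟨hCs.rightHit_mem f hu.1, by rw [← rightHit_leftHit, hu.2, map_smul]⟩
  have E_eq : E = C := hCmin E inf_le_left hE fun h0 => hv0 <| Subtype.ext <|
    (Submodule.mem_bot k).1 <| h0 ▸ mem_E.2
      ⟨v.2, congrArg Subtype.val (Module.End.mem_eigenspace_iff.1 hv)⟩
  refine ⟨μ, fun u hu => ?_⟩
  rw [← counit_leftHit, (mem_E.1 (E_eq ▸ hu)).2, map_smul, smul_eq_mul]

lemma IsHaarFunctional.eq_zero_of_counit_eq_zero [CharZero k] [IsAlgClosed k]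
    (hl : IsHaarFunctional l) (hS : Function.Involutive (antipode k (A := H)))
    (hK : IsHopfSubalgebra k H K) (hC : IsSimpleSubcoalgebra k H C) {x : H}
    (hx : x ∈ C * K.toSubmodule) (hxc : IsCocomm k H x)
    (hxK : ∀ a ∈ K, x * a = counit (R := k) a • x) (h0 : counit (R := k) x = 0) : x = 0 := by
  obtain ⟨μ, hμ⟩ := hC.exists_apply_eq_mul_counit (hl.leftHit_haarForm_of_isCocomm hS hxc)
  have haarForm_eq (h : H) (hh : h ∈ C * K.toSubmodule) : haarForm l x h = μ * counit h := by
    induction hh using Submodule.mul_induction_on' with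
    | mem_mul_mem u hu a ha =>
      rw [haarForm_apply, antipode_mul_antidistrib, ← mul_assoc, hxK _ (hK.2 a ha), smul_mul_assoc,
        map_smul, ← haarForm_apply, hμ u hu, Bialgebra.counit_mul, counit_antipode, smul_eq_mul]
      ring
    | add a _ b _ ha hb => rw [map_add, map_add, ha, hb, mul_add]
  have hY := hC.1.mul hK.1
  have eq_smul := hl.eq_smul_regularCharacter hS hY hx haarForm_eq
  have finrank_ne_zero : (Module.finrank k ↥(C * K.toSubmodule) : k) ≠ 0 := by
    rw [Nat.cast_ne_zero, Ne, Submodule.finrank_eq_zero]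
    exact ne_bot_of_le_ne_bot hC.2.1 fun c hc => by
      simpa using Submodule.mul_mem_mul hc (K.mem_toSubmodule.2 K.one_mem)
  rw [eq_smul, map_smul, hY.counit_regularCharacter, smul_eq_mul, mul_eq_zero] at h0
  rw [eq_smul, h0.resolve_right finrank_ne_zero, zero_smul]

lemma IsHaarFunctional.mul_mul_eq_counit_smul [CharZero k] [IsAlgClosed k]
    (hl : IsHaarFunctional l) (hS : Function.Involutive (antipode k (A := H)))
    (hK : IsHopfSubalgebra k H K) (hΛ : IsIdempotentIntegral k H K Λ)
    (hC : IsSimpleSubcoalgebra k H C) (hDC : D * C * K.toSubmodule ≤ C * K.toSubmodule) {d c : H}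
    (hd : d ∈ D) (hdc : IsCocomm k H d) (hc : c ∈ C) (hcc : IsCocomm k H c) :
    d * (c * Λ) = counit (R := k) d • (c * Λ) := by
  have hΛc := hl.isCocomm_of_isIdempotentIntegral hS hK hΛ
  have mul_eq (x a : H) (ha : a ∈ K) : x * Λ * a = counit (R := k) a • (x * Λ) := by
    rw [mul_assoc, (hΛ.2.2 a ha).2, mul_smul_comm]
  refine sub_eq_zero.1 (hl.eq_zero_of_counit_eq_zero hS hK hC ?_ ?_ (fun a ha => ?_) ?_)
  · refine Submodule.sub_mem _ (hDC ?_) (Submodule.smul_mem _ _ (Submodule.mul_mem_mul hc hΛ.1))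
    rw [← mul_assoc]
    exact Submodule.mul_mem_mul (Submodule.mul_mem_mul hd hc) hΛ.1
  · exact (hdc.mul (hcc.mul hΛc)).sub ((hcc.mul hΛc).smul _)
  · rw [sub_mul, ← mul_assoc, mul_eq _ a ha, smul_mul_assoc, mul_eq _ a ha, smul_comm,
      ← smul_sub, mul_assoc]
  · rw [map_sub, map_smul, Bialgebra.counit_mul, smul_eq_mul, sub_self]

lemma IsHaarFunctional.conjK_mul_le [CharZero k] (hl : IsHaarFunctional l)
    (hS : Function.Involutive (antipode k (A := H))) (hK : IsHopfSubalgebra k H K) (hΛK : Λ ∈ K)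
    (hΛ : counit (R := k) Λ = 1) (hC : IsSubcoalgebra k H C) :
    conjK k H K Λ C * C ≤ C * K.toSubmodule := by
  rw [conjK, sSup_eq_iSup, Submodule.iSup_mul]
  refine iSup_le fun D => ?_
  rw [Submodule.iSup_mul]
  exact iSup_le fun ⟨hD, h⟩ => hl.mul_le_mul_toSubmodule hS hK hΛK hΛ hD.1 hC <|
    h _ hD.1.regularCharacter_mem hD.1.isCocomm_regularCharacter
      _ hC.regularCharacter_mem hC.isCocomm_regularCharacter

lemma IsHaarFunctional.le_conjK [CharZero k] [IsAlgClosed k] (hl : IsHaarFunctional l)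
    (hS : Function.Involutive (antipode k (A := H))) (hK : IsHopfSubalgebra k H K)
    (hΛ : IsIdempotentIntegral k H K Λ) (hC : IsSimpleSubcoalgebra k H C)
    (hD : IsSubcoalgebra k H D) (hDC : D * C * K.toSubmodule ≤ C * K.toSubmodule) :
    D ≤ conjK k H K Λ C :=
  (hl.le_sSup_isSimpleSubcoalgebra hS hD).trans <| sSup_le_sSup fun _ ⟨hED, hE⟩ =>
    ⟨hE, fun _ hd hdc _ hc hcc =>
      hl.mul_mul_eq_counit_smul hS hK hΛ hC hDC (hED hd) hdc hc hcc⟩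

end Cosets

theorem statement_10_general (K : Subalgebra k H) (hK : IsHopfSubalgebra k H K)
    (Λ : H) (hΛ : IsIdempotentIntegral k H K Λ)
    (C : Submodule k H) (hC : IsSimpleSubcoalgebra k H C) :
    conjK k H K Λ C * C * K.toSubmodule = C * K.toSubmodule ∧
    ∀ D : Submodule k H, IsSubcoalgebra k H D →
      D * C * K.toSubmodule ≤ C * K.toSubmodule → D ≤ conjK k H K Λ C := by
  obtain ⟨l, hl⟩ := exists_isHaarFunctional k H
  have hS := involutive_antipode k H
  have : Nontrivial H := nontrivial_of_ne Λ 0 fun h => by simpa [h] using hΛ.2.1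
  refine ⟨le_antisymm ?_ ?_, fun D hD hDC => hl.le_conjK hS hK hΛ hC hD hDC⟩
  · calc conjK k H K Λ C * C * K.toSubmodule
        ≤ C * K.toSubmodule * K.toSubmodule :=
          mul_le_mul_left (hl.conjK_mul_le hS hK hΛ.1 hΛ.2.1 hC.1) _
      _ = C * K.toSubmodule := by rw [mul_assoc, K.isIdempotentElem_toSubmodule]
  · refine mul_le_mul_left (fun c hc => ?_) _
    simpa using Submodule.mul_mem_mul (one_mem_conjK K Λ) hc

/-- Proposition 31: `ᶜK·C·K = C·K`, and `ᶜK` is the maximal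
Hopf subalgebra of `H` with this property: any Hopf subalgebra `L` of `H`
with `L·C·K = C·K` is contained in `ᶜK`. -/
theorem statement_10 (K : Subalgebra k H) (hK : IsHopfSubalgebra k H K)
    (Λ : H) (hΛ : IsIdempotentIntegral k H K Λ)
    (C : Submodule k H) (hC : IsSimpleSubcoalgebra k H C) :
    conjK k H K Λ C * C * K.toSubmodule = C * K.toSubmodule ∧
    ∀ L : Subalgebra k H, IsHopfSubalgebra k H L →
      L.toSubmodule * C * K.toSubmodule = C * K.toSubmodule →
      L.toSubmodule ≤ conjK k H K Λ C := by
  obtain ⟨h_eq, h_max⟩ := statement_10_general k H K hK Λ hΛ C hC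
  exact ⟨h_eq, fun L hL hLC => h_max _ hL.1 hLC.le⟩

end Statements

end

end MackeyPaper
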